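/- arXiv:math/0402227 — 5 statements merged into one kernel-verified Lean document; each statement's English description precedes it below -/
import Mathlib

section
/- Let σ be a Borel measure on the interval (0,1] with σ((0,1)) > 0, and let β* be a real number with ∫_{(0,1]} x^{β*} σ(dx) = 1. Then for every complex number β with Re β > β* one has ∫_{(0,1]} x^{Re β} σ(dx) < ∞ and the strict inequality |∫_{(0,1]} x^{β} σ(dx)| < 1. In particular, β* is the unique real solution of φ(β) = 1, and the equation φ(β) = 1 has no complex solutions with Re β > β*. -/
open MeasureTheory Set

lemma frequently_ae_restrict_Ioc_lt_iff {α : Type*} [LinearOrder α] [TopologicalSpace α]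
    [OrderClosedTopology α] [MeasurableSpace α] [OpensMeasurableSpace α] {μ : Measure α} {a b : α} :
    (∃ᵐ x ∂μ.restrict (Ioc a b), x < b) ↔ μ (Ioo a b) ≠ 0 := by
  have hset : {x | x < b} ∩ Ioc a b = Ioo a b := by grind
  rw [frequently_ae_iff, Measure.restrict_apply' measurableSet_Ioc, hset]

-- Equality fails when `r = 0`, `β.re = 0` and `β ≠ 0`: then `0 ^ β = 0`, but `0 ^ β.re = 1`.
lemma norm_ofReal_cpow_le_rpow_re {r : ℝ} (hr : 0 ≤ r) (β : ℂ) : ‖(r : ℂ) ^ β‖ ≤ r ^ β.re := by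
  simpa [Complex.arg_ofReal_of_nonneg hr, abs_of_nonneg hr] using Complex.norm_cpow_le (r : ℂ) β

section PowersOfFunctions

variable {α : Type*} [MeasurableSpace α] {μ : Measure α} {f : α → ℝ}

lemma enorm_integral_cpow_le_lintegral_rpow_re (hf : ∀ᵐ x ∂μ, 0 ≤ f x) (β : ℂ) :
    ‖∫ x, (f x : ℂ) ^ β ∂μ‖ₑ ≤ ∫⁻ x, ENNReal.ofReal (f x ^ β.re) ∂μ := by
  refine (enorm_integral_le_lintegral_enorm _).trans (lintegral_mono_ae ?_)
  filter_upwards [hf] with x hx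
  rw [← ofReal_norm]
  exact ENNReal.ofReal_le_ofReal (norm_ofReal_cpow_le_rpow_re hx β)

lemma lintegral_rpow_lt_lintegral_rpow_of_exponent_gt (hf : AEMeasurable f μ)
    (hf_mem : ∀ᵐ x ∂μ, f x ∈ Ioc 0 1) (hf_lt : ∃ᵐ x ∂μ, f x < 1) {a b : ℝ} (hab : a < b)
    (ha : ∫⁻ x, ENNReal.ofReal (f x ^ a) ∂μ ≠ ⊤) :
    ∫⁻ x, ENNReal.ofReal (f x ^ b) ∂μ < ∫⁻ x, ENNReal.ofReal (f x ^ a) ∂μ := by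
  have hle : ∀ᵐ x ∂μ, ENNReal.ofReal (f x ^ b) ≤ ENNReal.ofReal (f x ^ a) := by
    filter_upwards [hf_mem] with x hx
    exact ENNReal.ofReal_le_ofReal (Real.rpow_le_rpow_of_exponent_ge hx.1 hx.2 hab.le)
  have hlt : ∃ᵐ x ∂μ, ENNReal.ofReal (f x ^ b) ≠ ENNReal.ofReal (f x ^ a) := by
    refine (hf_lt.and_eventually hf_mem).mono fun x ⟨hx_lt, hx_mem⟩ => ne_of_lt ?_
    exact (ENNReal.ofReal_lt_ofReal_iff (Real.rpow_pos_of_pos hx_mem.1 a)).2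
      (Real.rpow_lt_rpow_of_exponent_gt hx_mem.1 hx_lt hab)
  exact lintegral_strict_mono_of_ae_le_of_frequently_ae_lt (by fun_prop)
    (ne_top_of_le_ne_top ha (lintegral_mono_ae hle)) hle hlt

theorem malthusian_unique_and_no_solutions_to_the_right_general (hf : AEMeasurable f μ)
    (hf_mem : ∀ᵐ x ∂μ, f x ∈ Ioc 0 1) (hf_lt : ∃ᵐ x ∂μ, f x < 1) {a : ℝ}
    (ha : ∫⁻ x, ENNReal.ofReal (f x ^ a) ∂μ ≠ ⊤) {β : ℂ} (hβ : a < β.re) :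
    ∫⁻ x, ENNReal.ofReal (f x ^ β.re) ∂μ < ⊤ ∧
      ‖∫ x, (f x : ℂ) ^ β ∂μ‖ₑ < ∫⁻ x, ENNReal.ofReal (f x ^ a) ∂μ := by
  have hlt := lintegral_rpow_lt_lintegral_rpow_of_exponent_gt hf hf_mem hf_lt hβ ha
  have hf_nonneg : ∀ᵐ x ∂μ, 0 ≤ f x := hf_mem.mono fun _ hx => hx.1.le
  exact ⟨hlt.trans_le le_top, (enorm_integral_cpow_le_lintegral_rpow_re hf_nonneg β).trans_lt hlt⟩

end PowersOfFunctions

/-- If `σ` is a Borel measure on `(0,1]` with `σ((0,1)) > 0` and `β*` is a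
real number with `∫ x^{β*} dσ = 1` (Malthusian exponent), then for every complex `β` with
`Re β > β*` the integral `∫ x^{Re β} dσ` is finite and `|∫ x^β dσ| < 1`.  In particular `β*`
is the unique real solution of `φ(β) = 1` and there is no complex solution with `Re β > β*`. -/
theorem malthusian_unique_and_no_solutions_to_the_right
    (σ : Measure ℝ) (βs : ℝ)
    (hpos : 0 < σ (Ioo 0 1))
    (hβs : ∫⁻ x in Ioc (0:ℝ) 1, ENNReal.ofReal (x ^ βs) ∂σ = 1) :
    ∀ β : ℂ, βs < β.re →
      (∫⁻ x in Ioc (0:ℝ) 1, ENNReal.ofReal (x ^ β.re) ∂σ) < ⊤ ∧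
      ‖∫ x in Ioc (0:ℝ) 1, (x : ℂ) ^ β ∂σ‖ < 1 := by
  intro β hβ
  have h_lt : ∃ᵐ x ∂σ.restrict (Ioc 0 1), x < 1 := frequently_ae_restrict_Ioc_lt_iff.2 hpos.ne'
  have h_ne_top := hβs.trans_ne ENNReal.one_ne_top
  simpa only [id_eq, hβs, ← ofReal_norm, ENNReal.ofReal_lt_one] using
    malthusian_unique_and_no_solutions_to_the_right_general aemeasurable_id
      (ae_restrict_mem measurableSet_Ioc) h_lt h_ne_top hβ
end

section
/- Let σ be a Borel measure on the interval (0,1] and β* a real number with ∫_{(0,1]} x^{β*} σ(dx) = 1. Suppose that for some real s ≠ 0 the complex number β = β* + i·s also satisfies ∫_{(0,1]} x^{β} σ(dx) = 1. Then σ is arithmetic: with r = exp(−2π/|s|) ∈ (0,1), the measure σ is supported on the geometric sequence {r^n : n = 0, 1, 2, ...}, i.e. σ((0,1] \ {r^n : n ∈ ℕ}) = 0. -/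
open MeasureTheory Set Real

/- With `β = β* + i s` one has `|x ^ β| = x ^ β*` on `(0, ∞)`, so the hypotheses say that
`∫ x ^ β ∂σ = ∫ |x ^ β| ∂σ`: the triangle inequality for integrals is an equality, which forces
`x ^ β = |x ^ β|` almost everywhere. The argument `s * log x` of `x ^ β` is then a multiple of
`2π`, that is, `x` is an integer power of `exp (-2π / |s|)`, and the power is nonnegative when
`x ≤ 1`. -/

lemma ae_eq_norm_of_re_integral_eq_integral_norm {α 𝕜 : Type*} [RCLike 𝕜] [MeasurableSpace α]
    {μ : Measure α} {f : α → 𝕜} (hf : Integrable f μ)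
    (h : RCLike.re (∫ x, f x ∂μ) = ∫ x, ‖f x‖ ∂μ) :
    ∀ᵐ x ∂μ, f x = (‖f x‖ : 𝕜) := by
  have h_re_eq : (fun x ↦ RCLike.re (f x)) =ᵐ[μ] fun x ↦ ‖f x‖ := by
    rw [← integral_eq_iff_of_ae_le hf.re hf.norm (ae_of_all _ fun x ↦ RCLike.re_le_norm (f x)),
      integral_re hf, h]
  filter_upwards [h_re_eq] with x hx
  rw [← hx]
  exact (RCLike.re_eq_self_of_le hx.ge).symm

lemma ofReal_cpow_eq_norm_iff {x : ℝ} (hx : 0 < x) (z : ℂ) :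
    (x : ℂ) ^ z = ‖(x : ℂ) ^ z‖ ↔ ∃ n : ℤ, z.im * log x = n * (2 * π) := by
  have h_norm : ((‖(x : ℂ) ^ z‖ : ℝ) : ℂ) = Complex.exp (log x * z.re) := by
    rw [Complex.norm_cpow_eq_rpow_re_of_pos hx, rpow_def_of_pos hx]
    push_cast
    rfl
  rw [h_norm, Complex.cpow_def_of_ne_zero (Complex.ofReal_ne_zero.2 hx.ne'),
    ← Complex.ofReal_log hx.le, Complex.exp_eq_exp_iff_exists_int]
  simp [Complex.ext_iff, mul_comm]

lemma eq_exp_zpow_iff {x : ℝ} (hx : 0 < x) (a : ℝ) (k : ℤ) :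
    x = exp a ^ k ↔ log x = k * a := by
  rw [← log_injOn_pos.eq_iff hx (zpow_pos (exp_pos a) k), log_zpow, log_exp]

lemma exists_eq_exp_zpow_of_mul_log_eq {x s : ℝ} (hx : 0 < x) (hs : s ≠ 0) {n : ℤ}
    (h : s * log x = n * (2 * π)) :
    ∃ k : ℤ, x = exp (-(2 * π) / |s|) ^ k := by
  simp only [eq_exp_zpow_iff hx]
  rcases abs_choice s with habs | habs
  · refine ⟨-n, ?_⟩
    rw [habs]
    push_cast
    field_simp
    linarith
  · refine ⟨n, ?_⟩
    rw [habs]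
    field_simp
    linarith

lemma ae_exists_eq_exp_zpow_of_integral_cpow_eq {μ : Measure ℝ} (hμ : ∀ᵐ x ∂μ, 0 < x) {z : ℂ}
    (hz : z.im ≠ 0) (hint : Integrable (fun x : ℝ ↦ x ^ z.re) μ)
    (h : ∫ x : ℝ, (x : ℂ) ^ z ∂μ = ∫ x : ℝ, x ^ z.re ∂μ) :
    ∀ᵐ x ∂μ, ∃ k : ℤ, x = exp (-(2 * π) / |z.im|) ^ k := by
  have h_norm : (fun x : ℝ ↦ ‖(x : ℂ) ^ z‖) =ᵐ[μ] fun x ↦ x ^ z.re := by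
    filter_upwards [hμ] with x hx using Complex.norm_cpow_eq_rpow_re_of_pos hx z
  have hint_cpow : Integrable (fun x : ℝ ↦ (x : ℂ) ^ z) μ :=
    (integrable_norm_iff
      (Complex.measurable_ofReal.pow measurable_const).aestronglyMeasurable).1
        (hint.congr h_norm.symm)
  have h_re : RCLike.re (∫ x : ℝ, (x : ℂ) ^ z ∂μ) = ∫ x : ℝ, ‖(x : ℂ) ^ z‖ ∂μ := by
    rw [h, integral_congr_ae h_norm, RCLike.re_to_complex, Complex.ofReal_re]
  filter_upwards [hμ, ae_eq_norm_of_re_integral_eq_integral_norm hint_cpow h_re] with x hx h_eq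
  obtain ⟨n, hn⟩ := (ofReal_cpow_eq_norm_iff hx z).1 h_eq
  exact exists_eq_exp_zpow_of_mul_log_eq hx hz hn

lemma Ioc_zero_one_diff_pow_eq_diff_zpow {r : ℝ} (hr₀ : 0 < r) (hr₁ : r < 1) :
    Ioc (0 : ℝ) 1 \ {y | ∃ n : ℕ, y = r ^ n} = Ioc 0 1 \ {y | ∃ k : ℤ, y = r ^ k} := by
  ext y
  simp only [mem_sdiff, mem_ofPred_eq, and_congr_right_iff, not_iff_not]
  rintro ⟨-, hy⟩
  constructor
  · rintro ⟨n, rfl⟩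
    exact ⟨n, (zpow_natCast r n).symm⟩
  · rintro ⟨k, rfl⟩
    lift k to ℕ using (zpow_le_one_iff_right_of_lt_one₀ hr₀ hr₁).1 hy
    exact ⟨k, zpow_natCast r k⟩

theorem complex_malthusian_root_implies_arithmetic_general
    {σ : Measure ℝ} {S : Set ℝ} (hS : S ⊆ Ioi 0) {βs s : ℝ} (hs : s ≠ 0) (c : NNReal)
    (hβs : ∫⁻ x in S, ENNReal.ofReal (x ^ βs) ∂σ = c)
    (hβ : ∫ x in S, (x : ℂ) ^ ((βs : ℂ) + Complex.I * s) ∂σ = (c : ℝ)) :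
    σ (S \ {y : ℝ | ∃ k : ℤ, y = exp (-(2 * π) / |s|) ^ k}) = 0 := by
  have h_pos : ∀ᵐ x ∂σ.restrict S, 0 < x :=
    ae_restrict_of_ae_restrict_of_subset hS (ae_restrict_mem measurableSet_Ioi)
  have h_nonneg : 0 ≤ᵐ[σ.restrict S] fun x ↦ x ^ βs := by
    filter_upwards [h_pos] with x hx using rpow_nonneg hx.le βs
  have h_meas : AEStronglyMeasurable (fun x : ℝ ↦ x ^ βs) (σ.restrict S) := by fun_prop
  have hint : Integrable (fun x : ℝ ↦ x ^ βs) (σ.restrict S) :=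
    (lintegral_ofReal_ne_top_iff_integrable h_meas h_nonneg).1 (hβs ▸ ENNReal.coe_ne_top)
  have h_integral : ∫ x in S, x ^ βs ∂σ = c := by
    rw [integral_eq_lintegral_of_nonneg_ae h_nonneg h_meas, hβs, ENNReal.coe_toReal]
  have h_ae := ae_exists_eq_exp_zpow_of_integral_cpow_eq (z := βs + Complex.I * s) h_pos
    (by simpa using hs) (by simpa using hint) (by simpa [h_integral] using hβ)
  have h_countable : {y : ℝ | ∃ k : ℤ, y = exp (-(2 * π) / |s|) ^ k}.Countable := by
    refine (countable_range fun k : ℤ ↦ exp (-(2 * π) / |s|) ^ k).mono ?_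
    rintro _ ⟨k, rfl⟩
    exact mem_range_self k
  rw [Set.sdiff_eq, inter_comm, ← Measure.restrict_apply h_countable.measurableSet.compl]
  simpa using mem_ae_iff.1 h_ae

/-- If `σ` is a Borel measure on `(0,1]`, `β*` real with `φ(β*) = 1`
(and the integral finite), and `β = β* + i·s` with `s ≠ 0` also satisfies `φ(β) = 1`,
then `σ` is arithmetic: with `r = exp(−2π/|s|)` the measure `σ` is carried by the
geometric sequence `{r^n : n ∈ ℕ}`. -/
theorem complex_malthusian_root_implies_arithmetic
    (σ : Measure ℝ) (βs s : ℝ) (hs : s ≠ 0)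
    (hβs : ∫⁻ x in Ioc (0:ℝ) 1, ENNReal.ofReal (x ^ βs) ∂σ = 1)
    (hβ : ∫ x in Ioc (0:ℝ) 1, (x : ℂ) ^ ((βs : ℂ) + Complex.I * s) ∂σ = 1) :
    σ (Ioc (0:ℝ) 1 \ {y : ℝ | ∃ n : ℕ, y = Real.exp (-(2 * π) / |s|) ^ n}) = 0 := by
  have hr : exp (-(2 * π) / |s|) < 1 :=
    exp_lt_one_iff.2 (div_neg_of_neg_of_pos (neg_neg_of_pos two_pi_pos) (abs_pos.2 hs))
  rw [Ioc_zero_one_diff_pow_eq_diff_zpow (exp_pos _) hr]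
  exact complex_malthusian_root_implies_arithmetic_general Ioc_subset_Ioi_self hs 1
    (by simpa using hβs) (by simpa using hβ)
end

section
/- Let σ be a Borel measure on (0,1], α > 0, and β a complex number with ∫_{(0,1]} x^{Re β} σ(dx) < ∞. Then the entire function m(t,β) = Σ_{n=0}^∞ ((−t)^n/n!)·∏_{k=0}^{n−1} ψ(β+αk) satisfies m(0,β) = 1 and, for every real t ≥ 0, the function x ↦ m(x^α t, β)·x^β is σ-integrable on (0,1] and ∂_t m(t,β) = −m(t,β) + ∫_{(0,1]} m(x^α t, β)·x^β σ(dx); that is, m(·,β) solves the Cauchy problem for the integro-differential equation of the mean β-power sums of the self-similar fragmentation. -/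
open MeasureTheory Set

/-- The Mellin transform (characteristic function) `φ(w) = ∫_{(0,1]} x^w σ(dx)`. -/
noncomputable def mellin' (σ : Measure ℝ) (w : ℂ) : ℂ :=
  ∫ x in Ioc (0:ℝ) 1, (x : ℂ) ^ w ∂σ

/-- `ψ = 1 − φ`. -/
noncomputable def psi' (σ : Measure ℝ) (w : ℂ) : ℂ := 1 - mellin' σ w

/-- The entire function `m(t,β) = Σ_n ((−t)^n/n!)·γ(n,β)`, `γ(n,β) = ∏_{k<n} ψ(β+αk)`. -/
noncomputable def mSeries (σ : Measure ℝ) (α : ℝ) (β : ℂ) (t : ℂ) : ℂ :=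
  ∑' n : ℕ, (-t) ^ n / (n.factorial : ℂ) * ∏ k ∈ Finset.range n, psi' σ (β + (α : ℂ) * k)

/-!
The coefficients `c n = (-1)ⁿ γ(n, β)` obey `c (n + 1) = φ(β + αn) c n - c n` and grow at most
exponentially, so `m(·, β)` is an entire exponential generating function whose derivative, the
generating function of the shifted sequence, is `-m(·, β)` plus the generating function of
`φ(β + αn) c n`. Since `φ(β + αn) = ∫ (x^α)ⁿ x^β σ(dx)`, termwise integration identifies the latter
with `∫ m(x^α t, β) x^β σ(dx)`.
-/

open scoped Nat

section ExpGenFun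

lemma summable_pow_div_factorial_mul_norm {E : Type*} [SeminormedAddCommGroup E]
    {c : ℕ → E} {C : ℝ} (hc : ∀ n, ‖c n‖ ≤ C ^ n) (r : ℝ) :
    Summable fun n => r ^ n / n ! * ‖c n‖ := by
  refine .of_norm_bounded (Real.summable_pow_div_factorial (|r| * C)) fun n => ?_
  rw [norm_mul, norm_norm, norm_div, norm_pow, Real.norm_natCast, Real.norm_eq_abs, mul_pow,
    ← div_mul_eq_mul_div]
  gcongr
  exact hc n

variable {E : Type*} [NormedAddCommGroup E] [NormedSpace ℂ E]

/-- The exponential generating function `∑ₙ (zⁿ / n!) • c n` of a sequence of vectors, with the junk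
value `0` where the series diverges. -/
noncomputable def expGenFun (c : ℕ → E) (z : ℂ) : E :=
  ∑' n : ℕ, (z ^ n / (n ! : ℂ)) • c n

lemma expGenFun_zero (c : ℕ → E) : expGenFun c 0 = c 0 := by
  rw [expGenFun, tsum_eq_single 0 fun n hn => by simp [hn]]
  simp

lemma norm_pow_div_factorial_smul (z : ℂ) (n : ℕ) (v : E) :
    ‖(z ^ n / (n ! : ℂ)) • v‖ = ‖z‖ ^ n / n ! * ‖v‖ := by
  rw [norm_smul, norm_div, norm_pow, Complex.norm_natCast]

lemma deriv_pow_succ_div_factorial_smul (n : ℕ) (v : E) (z : ℂ) :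
    deriv (fun w : ℂ => (w ^ (n + 1) / ((n + 1)! : ℂ)) • v) z = (z ^ n / (n ! : ℂ)) • v := by
  refine (((hasDerivAt_pow (n + 1) z).div_const _).smul_const v).deriv.trans ?_
  rw [Nat.factorial_succ, Nat.add_sub_cancel, Nat.cast_mul,
    mul_div_mul_left _ _ (Nat.cast_ne_zero.2 n.succ_ne_zero)]

variable [CompleteSpace E] {c : ℕ → E} (hc : ∀ r : ℝ, Summable fun n => r ^ n / n ! * ‖c n‖)

include hc

lemma hasSum_expGenFun (z : ℂ) :
    HasSum (fun n => (z ^ n / (n ! : ℂ)) • c n) (expGenFun c z) :=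
  Summable.hasSum <| .of_norm <| by simpa only [norm_pow_div_factorial_smul] using hc ‖z‖

lemma hasDerivAt_expGenFun (z : ℂ) :
    HasDerivAt (expGenFun c) (expGenFun (fun n => c (n + 1)) z) z := by
  have hdiff (n : ℕ) : DifferentiableOn ℂ (fun w : ℂ => (w ^ n / (n ! : ℂ)) • c n)
      (Metric.ball 0 (‖z‖ + 1)) := by fun_prop
  have hbound (n : ℕ) (w : ℂ) (hw : w ∈ Metric.ball 0 (‖z‖ + 1)) :
      ‖(w ^ n / (n ! : ℂ)) • c n‖ ≤ (‖z‖ + 1) ^ n / n ! * ‖c n‖ := by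
    rw [norm_pow_div_factorial_smul]
    gcongr
    exact (mem_ball_zero_iff.1 hw).le
  have hz : z ∈ Metric.ball (0 : ℂ) (‖z‖ + 1) := by simp
  have hdiffAt : DifferentiableAt ℂ (expGenFun c) z :=
    (Complex.differentiableOn_tsum_of_summable_norm (hc _) hdiff Metric.isOpen_ball
      hbound).differentiableAt (Metric.isOpen_ball.mem_nhds hz)
  have hderiv : HasSum (fun n : ℕ => deriv (fun w : ℂ => (w ^ n / (n ! : ℂ)) • c n) z)
      (deriv (expGenFun c) z) :=
    Complex.hasSum_deriv_of_summable_norm (hc _) hdiff Metric.isOpen_ball hbound hz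
  refine hdiffAt.hasDerivAt.congr_deriv ?_
  rw [← hderiv.tsum_eq, hderiv.summable.tsum_eq_zero_add]
  simp [deriv_pow_succ_div_factorial_smul, expGenFun]

lemma continuous_expGenFun : Continuous (expGenFun c) :=
  continuous_iff_continuousAt.2 fun z => (hasDerivAt_expGenFun hc z).continuousAt

variable {X : Type*} [MeasurableSpace X] {μ : Measure X} {g h : X → ℂ} {R : ℝ}

lemma integrable_smul_expGenFun (hg : AEStronglyMeasurable g μ) (hgR : ∀ᵐ x ∂μ, ‖g x‖ ≤ R)
    (hh : Integrable h μ) (z : ℂ) : Integrable (fun x => h x • expGenFun c (g x * z)) μ := by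
  obtain ⟨B, hB⟩ := (isCompact_closedBall (0 : ℂ) (R * ‖z‖)).exists_bound_of_continuousOn
    (continuous_expGenFun hc).continuousOn
  refine hh.smul_bdd B
    ((continuous_expGenFun hc).comp_aestronglyMeasurable (hg.mul_const z)) ?_
  filter_upwards [hgR] with x hx
  refine hB _ (mem_closedBall_zero_iff.2 ?_)
  rw [norm_mul]
  gcongr

end ExpGenFun

section Moments

variable {X : Type*} [MeasurableSpace X] {μ : Measure X} {g h : X → ℂ} {R : ℝ}

lemma integrable_pow_mul (hg : AEStronglyMeasurable g μ) (hgR : ∀ᵐ x ∂μ, ‖g x‖ ≤ R)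
    (hh : Integrable h μ) (n : ℕ) : Integrable (fun x => g x ^ n * h x) μ := by
  refine hh.bdd_mul (c := R ^ n) (hg.pow n) ?_
  filter_upwards [hgR] with x hx
  rw [norm_pow]
  gcongr

lemma integral_norm_pow_mul_le (hgR : ∀ᵐ x ∂μ, ‖g x‖ ≤ R) (hh : Integrable h μ) (n : ℕ) :
    ∫ x, ‖g x ^ n * h x‖ ∂μ ≤ R ^ n * ∫ x, ‖h x‖ ∂μ := by
  rw [← integral_const_mul]
  refine integral_mono_of_nonneg (.of_forall fun _ => norm_nonneg _) (hh.norm.const_mul _) ?_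
  filter_upwards [hgR] with x hx
  rw [norm_mul, norm_pow]
  gcongr

lemma hasSum_integral_smul_expGenFun {E : Type*} [NormedAddCommGroup E] [NormedSpace ℂ E]
    [CompleteSpace E] {c : ℕ → E} (hc : ∀ r : ℝ, Summable fun n => r ^ n / n ! * ‖c n‖)
    (hg : AEStronglyMeasurable g μ) (hgR : ∀ᵐ x ∂μ, ‖g x‖ ≤ R) (hh : Integrable h μ) (z : ℂ) :
    HasSum (fun n => (z ^ n / (n ! : ℂ)) • (∫ x, g x ^ n * h x ∂μ) • c n)
      (∫ x, h x • expGenFun c (g x * z) ∂μ) := by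
  let F (n : ℕ) (x : X) : E := (g x ^ n * h x) • (z ^ n / (n ! : ℂ)) • c n
  have hF_int (n : ℕ) : Integrable (F n) μ := (integrable_pow_mul hg hgR hh n).smul_const _
  have hF_bound (n : ℕ) :
      ∫ x, ‖F n x‖ ∂μ ≤ (R * ‖z‖) ^ n / n ! * ‖c n‖ * ∫ x, ‖h x‖ ∂μ := by
    calc ∫ x, ‖F n x‖ ∂μ
        = (∫ x, ‖g x ^ n * h x‖ ∂μ) * (‖z‖ ^ n / n ! * ‖c n‖) := by
          simp only [F, norm_smul (_ * _ : ℂ), norm_pow_div_factorial_smul, integral_mul_const]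
      _ ≤ (R ^ n * ∫ x, ‖h x‖ ∂μ) * (‖z‖ ^ n / n ! * ‖c n‖) := by
          gcongr
          exact integral_norm_pow_mul_le hgR hh n
      _ = (R * ‖z‖) ^ n / n ! * ‖c n‖ * ∫ x, ‖h x‖ ∂μ := by ring
  have hF_summable : Summable fun n => ∫ x, ‖F n x‖ ∂μ :=
    .of_nonneg_of_le (fun n => integral_nonneg fun x => norm_nonneg _) hF_bound
      ((hc _).mul_right _)
  have hF_tsum (x : X) : ∑' n, F n x = h x • expGenFun c (g x * z) := by
    rw [← ((hasSum_expGenFun hc (g x * z)).const_smul (h x)).tsum_eq]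
    refine tsum_congr fun n => ?_
    simp only [F, smul_smul]
    ring_nf
  convert! hasSum_integral_of_summable_integral_norm hF_int hF_summable using 1
  · funext n
    rw [integral_smul_const, smul_comm]
  · simp only [hF_tsum]

end Moments

section Mellin

variable {σ : Measure ℝ} {α : ℝ} {β : ℂ}

lemma integrableOn_ofReal_cpow
    (hβ : ∫⁻ x in Ioc (0 : ℝ) 1, ENNReal.ofReal (x ^ β.re) ∂σ < ⊤) :
    IntegrableOn (fun x : ℝ => (x : ℂ) ^ β) (Ioc (0 : ℝ) 1) σ := by
  refine ⟨(Complex.measurable_ofReal.pow_const β).aestronglyMeasurable, ?_⟩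
  rw [hasFiniteIntegral_iff_norm]
  refine (setLIntegral_congr_fun measurableSet_Ioc fun x hx => ?_).trans_lt hβ
  rw [Complex.norm_cpow_eq_rpow_re_of_pos hx.1]

lemma ae_norm_ofReal_rpow_le_one (hα : 0 ≤ α) :
    ∀ᵐ x ∂σ.restrict (Ioc (0 : ℝ) 1), ‖((x ^ α : ℝ) : ℂ)‖ ≤ 1 :=
  ae_restrict_of_forall_mem measurableSet_Ioc fun x hx => by
    rw [Complex.norm_of_nonneg (Real.rpow_nonneg hx.1.le α)]
    exact Real.rpow_le_one hx.1.le hx.2 hα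

variable (σ α β)

lemma mellin'_add_mul_natCast (n : ℕ) :
    mellin' σ (β + α * n) = ∫ x in Ioc (0 : ℝ) 1, ((x ^ α : ℝ) : ℂ) ^ n * (x : ℂ) ^ β ∂σ :=
  setIntegral_congr_fun measurableSet_Ioc fun x hx => by
    have hx0 : (x : ℂ) ≠ 0 := Complex.ofReal_ne_zero.2 hx.1.ne'
    rw [Complex.cpow_add _ _ hx0, Complex.cpow_mul_nat, Complex.ofReal_cpow hx.1.le, mul_comm]

/-- The signed coefficients `(-1)ⁿ γ(n, β)`, for which `m(·, β)` is the exponential generating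
function. -/
noncomputable def mCoeff (n : ℕ) : ℂ :=
  ∏ k ∈ Finset.range n, -psi' σ (β + (α : ℂ) * k)

lemma mCoeff_succ (n : ℕ) :
    mCoeff σ α β (n + 1) = mellin' σ (β + α * n) * mCoeff σ α β n - mCoeff σ α β n := by
  rw [mCoeff, Finset.prod_range_succ, ← mCoeff, psi']
  ring

lemma mSeries_eq_expGenFun : mSeries σ α β = expGenFun (mCoeff σ α β) := by
  funext t
  refine tsum_congr fun n => ?_
  rw [mCoeff, Finset.prod_neg, Finset.card_range, neg_pow t, smul_eq_mul]
  ring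

variable {σ α β}

lemma norm_mellin'_add_mul_natCast_le (hα : 0 ≤ α)
    (hβ : IntegrableOn (fun x : ℝ => (x : ℂ) ^ β) (Ioc (0 : ℝ) 1) σ) (n : ℕ) :
    ‖mellin' σ (β + α * n)‖ ≤ ∫ x in Ioc (0 : ℝ) 1, ‖(x : ℂ) ^ β‖ ∂σ := by
  rw [mellin'_add_mul_natCast]
  refine (norm_integral_le_integral_norm _).trans ?_
  simpa only [one_pow, one_mul] using
    integral_norm_pow_mul_le (ae_norm_ofReal_rpow_le_one hα) hβ n

lemma norm_mCoeff_le (hα : 0 ≤ α)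
    (hβ : IntegrableOn (fun x : ℝ => (x : ℂ) ^ β) (Ioc (0 : ℝ) 1) σ) (n : ℕ) :
    ‖mCoeff σ α β n‖ ≤ (1 + ∫ x in Ioc (0 : ℝ) 1, ‖(x : ℂ) ^ β‖ ∂σ) ^ n := by
  have hpsi (k : ℕ) :
      ‖-psi' σ (β + α * k)‖ ≤ 1 + ∫ x in Ioc (0 : ℝ) 1, ‖(x : ℂ) ^ β‖ ∂σ := by
    rw [norm_neg, psi']
    refine (norm_sub_le _ _).trans ?_
    rw [norm_one]
    gcongr
    exact norm_mellin'_add_mul_natCast_le hα hβ k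
  rw [mCoeff, norm_prod]
  exact (Finset.prod_le_prod (fun _ _ => norm_nonneg _) fun k _ => hpsi k).trans_eq (by simp)

end Mellin

theorem mean_power_sum_solves_integro_differential_equation_general
    (σ : Measure ℝ) (α : ℝ) (hα : 0 ≤ α) (β : ℂ)
    (hβ : ∫⁻ x in Ioc (0 : ℝ) 1, ENNReal.ofReal (x ^ β.re) ∂σ < ⊤) :
    mSeries σ α β 0 = 1 ∧
    ∀ t : ℂ,
      IntegrableOn (fun x : ℝ => mSeries σ α β ((x ^ α : ℝ) * t) * (x : ℂ) ^ β) (Ioc (0 : ℝ) 1) σ ∧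
      HasDerivAt (mSeries σ α β)
        (-mSeries σ α β t
          + ∫ x in Ioc (0 : ℝ) 1, mSeries σ α β ((x ^ α : ℝ) * t) * (x : ℂ) ^ β ∂σ) t := by
  have hpow := integrableOn_ofReal_cpow hβ
  have hc := summable_pow_div_factorial_mul_norm (norm_mCoeff_le hα hpow)
  have hmeas : AEStronglyMeasurable (fun x : ℝ => ((x ^ α : ℝ) : ℂ)) (σ.restrict (Ioc 0 1)) :=
    (Complex.measurable_ofReal.comp (measurable_id.pow_const α)).aestronglyMeasurable
  have hle := ae_norm_ofReal_rpow_le_one (σ := σ) hα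
  simp only [mSeries_eq_expGenFun, mul_comm _ ((_ : ℂ) ^ β), ← smul_eq_mul ((_ : ℂ) ^ β)]
  refine ⟨by simp [expGenFun_zero, mCoeff], fun t =>
    ⟨integrable_smul_expGenFun hc hmeas hle hpow t, ?_⟩⟩
  refine (hasDerivAt_expGenFun hc t).congr_deriv ?_
  rw [neg_add_eq_sub, ← ((hasSum_integral_smul_expGenFun hc hmeas hle hpow t).sub
    (hasSum_expGenFun hc t)).tsum_eq, expGenFun]
  simp only [mCoeff_succ, mellin'_add_mul_natCast, smul_eq_mul, mul_sub]

/-- The power series `m(·,β)` satisfies `m(0,β) = 1` and, for every real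
`t ≥ 0`, the function `x ↦ m(x^α t, β)·x^β` is `σ`-integrable on `(0,1]` and
`∂_t m(t,β) = −m(t,β) + ∫_{(0,1]} m(x^α t, β)·x^β σ(dx)`:
the Cauchy problem for the mean power sums of the self-similar fragmentation. -/
theorem mean_power_sum_solves_integro_differential_equation
    (σ : Measure ℝ) (α : ℝ) (hα : 0 < α) (β : ℂ)
    (hβ : ∫⁻ x in Ioc (0:ℝ) 1, ENNReal.ofReal (x ^ β.re) ∂σ < ⊤) :
    mSeries σ α β 0 = 1 ∧
    ∀ t : ℝ, 0 ≤ t →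
      IntegrableOn (fun x : ℝ => mSeries σ α β ((x ^ α * t : ℝ) : ℂ) * (x : ℂ) ^ β)
        (Ioc (0:ℝ) 1) σ ∧
      HasDerivAt (fun s : ℝ => mSeries σ α β (s : ℂ))
        (-mSeries σ α β (t : ℂ)
          + ∫ x in Ioc (0:ℝ) 1, mSeries σ α β ((x ^ α * t : ℝ) : ℂ) * (x : ℂ) ^ β ∂σ) t := by
  obtain ⟨h_zero, h_eq⟩ :=
    mean_power_sum_solves_integro_differential_equation_general σ α hα.le β hβ
  exact ⟨h_zero, fun t _ => by
    simpa only [Complex.ofReal_mul] using (h_eq t).imp_right HasDerivAt.comp_ofReal⟩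
end

section
/- Let σ be a nonarithmetic Borel measure on (0,1] with σ((0,1]) > 1 and σ({1}) < 1, let α > 0, and assume there is a Malthusian exponent β* > 0, i.e. φ(β*) = 1, with β* > β_a. Then for every integer k ≥ 1, lim_{t→∞} t^{k} · m(t, β* + αk) = ((k−1)!/(α·ψ'(β*))) · ∏_{j=1}^{k−1} ψ(β* + αj)^{−1}, where ψ'(β*) = ∫_{(0,1]} (−log x)·x^{β*} σ(dx) (and all the factors ψ(β*+αj) are strictly positive). -/
open MeasureTheory Set Filter

/-- The real Mellin transform `φ(b) = ∫_{(0,1]} x^b σ(dx)`. -/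
noncomputable def mellinR (σ : Measure ℝ) (b : ℝ) : ℝ :=
  ∫ x in Ioc (0:ℝ) 1, x ^ b ∂σ

/-- `ψ = 1 − φ`. -/
noncomputable def psiR (σ : Measure ℝ) (b : ℝ) : ℝ := 1 - mellinR σ b

/-- The entire function `m(t,β) = Σ_n ((−t)^n/n!)·∏_{k<n} ψ(β+αk)`, real version. -/
noncomputable def mSeriesR (σ : Measure ℝ) (α : ℝ) (β : ℝ) (t : ℝ) : ℝ :=
  ∑' n : ℕ, (-t) ^ n / (n.factorial : ℝ) * ∏ k ∈ Finset.range n, psiR σ (β + α * k)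

/-- `σ` is arithmetic if it is carried by a geometric sequence `{r^n : n ∈ ℕ}`, `r ∈ (0,1)`. -/
def IsArithmeticMeasure (σ : Measure ℝ) : Prop :=
  ∃ r ∈ Ioo (0:ℝ) 1, σ (Ioc (0:ℝ) 1 \ {y : ℝ | ∃ n : ℕ, y = r ^ n}) = 0

/-! Let `q` be the law of `-α log x` when `x` is drawn from the probability measure
`x ^ β* σ(dx)`. Then `ψ(β* + α s)` is one minus the Laplace transform of `q` at `s`, and
`m_s(t) = m(t, β* + α s)` satisfies `m_s' = -ψ m_{s+1}` and the branching equation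
`m_s(t) - ∫ exp(-s y) m_s(exp(-y) t) q(dy) = ψ m_{s+1}(t)`, with `ψ` taken at `β* + α s`. Adding
the two equations shows that `m_s` stays positive on `[0, ∞)`; hence `m_s` is decreasing and convex
for `s > 0`. Concavity of the primitive of `m_1` bounds `t m_1(t)`, and convexity of `m_k` passes
from a bound on `t ^ k m_k(t)` to one on `t ^ (k + 1) m_{k+1}(t)`.

In the variable `u = log t` the function `G(u) = t m_1(t)` therefore solves the renewal equation
`G = q * G` up to a vanishing error. Along a sequence realizing `limsup G`, the renewal equation
forces `G` to stay near its limsup after backward translation by any point of the support of `q`,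
hence, `q` being nonlattice, by any large number. The integral of `s ↦ G(u - s)` against
`q (s, ∞) ds`, a measure of total mass `∫ y q(dy)`, tends to `1`, so the limsup is the inverse of
the mean of `q`; so is the liminf, and `G` converges. The limits for larger `k` follow by
induction: if `t ^ k m_k(t)` converges, then its derivative in `u`, which is
`k t ^ k m_k - ψ(β* + α k) t ^ (k + 1) m_{k+1}`, tends to zero by uniform continuity.
-/

section Renewal

open scoped Topology

lemma exists_sub_eq_of_mem_addSubgroup_closure {A : Type*} [AddCommGroup A] {S : Set A} {g : A}
    (hg : g ∈ AddSubgroup.closure S) :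
    ∃ a ∈ AddSubmonoid.closure S, ∃ b ∈ AddSubmonoid.closure S, a - b = g := by
  rw [← AddSubgroup.mem_toAddSubmonoid, AddSubgroup.closure_toAddSubmonoid,
    AddSubmonoid.closure_union, AddSubmonoid.mem_sup] at hg
  obtain ⟨a, ha, b, hb, rfl⟩ := hg
  rw [AddSubmonoid.closure_neg, AddSubmonoid.mem_neg] at hb
  exact ⟨a, ha, -b, hb, sub_neg_eq_add a b⟩

lemma exists_abs_sub_lt_of_dense_addSubgroup_closure {S : Set ℝ} (hS : ∀ y ∈ S, 0 ≤ y)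
    (hdense : Dense (AddSubgroup.closure S : Set ℝ)) {ε : ℝ} (hε : 0 < ε) :
    ∃ R, ∀ y ≥ R, ∃ z ∈ AddSubmonoid.closure S, |z - y| < ε := by
  obtain ⟨g, hgS, hg_pos, hg_lt⟩ := hdense.exists_mem_open isOpen_Ioo (nonempty_Ioo.2 hε)
  obtain ⟨a, ha, b, hb, rfl⟩ := exists_sub_eq_of_mem_addSubgroup_closure hgS
  have hb_nonneg : 0 ≤ b :=
    (AddSubmonoid.closure_le (S := AddSubmonoid.nonneg ℝ)).2 hS hb
  have ha_pos : 0 < a := by linarith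
  refine ⟨a * (a / (a - b)), fun y hy => ?_⟩
  have hy' : a / (a - b) ≤ y / a := by rwa [le_div_iff₀' ha_pos]
  -- Starting from `n • a ≥ y`, trading `i` copies of `a` for `b` walks down in steps `a - b < ε`.
  set n := ⌈y / a⌉₊
  have hn_ge : y ≤ n * a := (div_le_iff₀ ha_pos).1 (Nat.le_ceil _)
  have hn_lt : n * a - y < a := by
    have := (lt_div_iff₀ ha_pos).1 <| sub_lt_iff_lt_add.2 <| Nat.ceil_lt_add_one
      ((div_pos ha_pos hg_pos).le.trans hy')
    linarith
  set i := ⌊(n * a - y) / (a - b)⌋₊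
  have hi_le : i * (a - b) ≤ n * a - y :=
    (le_div_iff₀ hg_pos).1 (Nat.floor_le (div_nonneg (sub_nonneg.2 hn_ge) hg_pos.le))
  have hi_gt : n * a - y < (i + 1) * (a - b) := (div_lt_iff₀ hg_pos).1 (Nat.lt_floor_add_one _)
  have hin : i ≤ n := by
    have : (i : ℝ) ≤ a / (a - b) := (le_div_iff₀ hg_pos).2 (by linarith)
    exact_mod_cast this.trans (hy'.trans (Nat.le_ceil _))
  refine ⟨(n - i) • a + i • b, add_mem (nsmul_mem ha _) (nsmul_mem hb _), ?_⟩
  have hz : (n - i) • a + i • b = n * a - i * (a - b) := by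
    simp only [nsmul_eq_mul, Nat.cast_sub hin]
    ring
  rw [hz, abs_lt]
  constructor <;> linarith

/-- A measure on `ℝ` is lattice if it is carried by a subgroup `ℤ d`. The case `d = 0`, of a
multiple of the Dirac mass at `0`, is included. -/
def IsLatticeMeasure (q : Measure ℝ) : Prop :=
  ∃ d : ℝ, ∀ᵐ y ∂q, y ∈ AddSubgroup.zmultiples d

lemma not_ae_eq_zero_of_not_isLatticeMeasure {q : Measure ℝ} (hlat : ¬ IsLatticeMeasure q) :
    ¬ ∀ᵐ y ∂q, y = 0 :=
  fun h => hlat ⟨0, by simpa using h⟩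

lemma dense_addSubgroup_closure_support {q : Measure ℝ} (hlat : ¬ IsLatticeMeasure q) :
    Dense (AddSubgroup.closure q.support : Set ℝ) := by
  refine (AddSubgroup.dense_or_cyclic _).resolve_right fun ⟨d, hd⟩ => hlat ⟨d, ?_⟩
  filter_upwards [Measure.support_mem_ae] with y hy
  rw [AddSubgroup.zmultiples_eq_closure, ← hd]
  exact AddSubgroup.subset_closure hy

section Domination

variable {α ι : Type*} [MeasurableSpace α] {μ : Measure α} {l : Filter ι}
  [l.IsCountablyGenerated] {F : ι → α → ℝ}

-- A one-sided form of Scheffé's lemma: `|x| = 2 x⁺ - x`.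
lemma tendsto_integral_abs_sub_of_posPart {f bound : α → ℝ}
    (hF_meas : ∀ i, AEStronglyMeasurable (F i) μ) (hbound : Integrable bound μ)
    (hF_bound : ∀ i, ∀ᵐ a ∂μ, |F i a| ≤ bound a) (hf : Integrable f μ)
    (hpos : ∀ᵐ a ∂μ, Tendsto (fun i => max (F i a - f a) 0) l (𝓝 0))
    (hint : Tendsto (fun i => ∫ a, F i a ∂μ) l (𝓝 (∫ a, f a ∂μ))) :
    Tendsto (fun i => ∫ a, |F i a - f a| ∂μ) l (𝓝 0) := by
  have hF (i : ι) : Integrable (F i) μ := hbound.mono' (hF_meas i) (hF_bound i)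
  have hdiff (i : ι) : Integrable (fun a => F i a - f a) μ := (hF i).sub hf
  have hpos_int : Tendsto (fun i => ∫ a, max (F i a - f a) 0 ∂μ) l (𝓝 0) := by
    simpa using tendsto_integral_filter_of_dominated_convergence (fun a => bound a + |f a|)
      (.of_forall fun i => (hdiff i).pos_part.aestronglyMeasurable)
      (.of_forall fun i => by
        filter_upwards [hF_bound i] with a ha
        rw [Real.norm_of_nonneg (le_max_right _ _)]
        exact max_le (by linarith [le_abs_self (F i a), neg_abs_le (f a)])
          (by linarith [abs_nonneg (F i a), abs_nonneg (f a)]))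
      (hbound.add hf.abs) hpos
  have hsplit (i : ι) : ∫ a, |F i a - f a| ∂μ
      = 2 * (∫ a, max (F i a - f a) 0 ∂μ) - ((∫ a, F i a ∂μ) - ∫ a, f a ∂μ) := by
    rw [← integral_sub (hF i) hf, ← integral_const_mul,
      ← integral_sub ((hdiff i).pos_part.const_mul 2) (hdiff i)]
    refine integral_congr_ae (.of_forall fun a => ?_)
    rcases le_total 0 (F i a - f a) with h | h
    · simp only [abs_of_nonneg h, max_eq_left h]; ring
    · simp only [abs_of_nonpos h, max_eq_right h]; ring
  simpa [hsplit] using (hpos_int.const_mul 2).sub (hint.sub_const (∫ a, f a ∂μ))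

lemma abs_sub_mul_measureReal_univ_le [IsFiniteMeasure μ] [l.NeBot] {C η ε H : ℝ}
    (hF_meas : ∀ i, AEStronglyMeasurable (F i) μ) (hF_bound : ∀ i, ∀ᵐ a ∂μ, |F i a| ≤ C)
    (hF : ∀ᵐ a ∂μ, ∀ᶠ i in l, |F i a - η| ≤ ε)
    (hint : Tendsto (fun i => ∫ a, F i a ∂μ) l (𝓝 H)) :
    |H - η * μ.real univ| ≤ ε * μ.real univ := by
  have hF_int (i : ι) : Integrable (F i) μ := .of_bound (hF_meas i) C (hF_bound i)
  have hdev_int (i : ι) : Integrable (fun a => |F i a - η|) μ :=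
    ((hF_int i).sub (integrable_const η)).abs
  have hmax : Tendsto (fun i => ∫ a, max |F i a - η| ε ∂μ) l (𝓝 (∫ _, ε ∂μ)) := by
    refine tendsto_integral_filter_of_dominated_convergence (fun _ => C + |η| + |ε|)
      (.of_forall fun i => ((hdev_int i).sup (integrable_const ε)).aestronglyMeasurable)
      (.of_forall fun i => ?_) (integrable_const _) ?_
    · filter_upwards [hF_bound i] with a ha
      rw [Real.norm_of_nonneg ((abs_nonneg _).trans (le_max_left _ _))]
      exact max_le (by linarith [abs_sub (F i a) η, abs_nonneg ε])
        (by linarith [le_abs_self ε, abs_nonneg (F i a), abs_nonneg η])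
    · filter_upwards [hF] with a ha
      exact tendsto_const_nhds.congr' (ha.mono fun i hi => (max_eq_right hi).symm)
  rw [integral_const, smul_eq_mul, mul_comm] at hmax
  refine le_of_tendsto_of_tendsto' (hint.sub_const _).abs hmax fun i => ?_
  calc |∫ a, F i a ∂μ - η * μ.real univ| = |∫ a, (F i a - η) ∂μ| := by
        rw [integral_sub (hF_int i) (integrable_const η), integral_const, smul_eq_mul, mul_comm]
    _ ≤ ∫ a, |F i a - η| ∂μ := abs_integral_le_integral_abs
    _ ≤ ∫ a, max |F i a - η| ε ∂μ :=
        integral_mono (hdev_int i) ((hdev_int i).sup (integrable_const ε)) fun a => le_max_left _ _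

end Domination

variable {q : Measure ℝ} {G : ℝ → ℝ} {C η : ℝ} {ι : Type*} {l : Filter ι} {v : ι → ℝ}

lemma tendsto_sub_of_tendsto_integral_abs_sub [IsFiniteMeasure q] (hG : UniformContinuous G)
    (hG_bound : ∀ u, |G u| ≤ C) (hv : Tendsto (fun i => ∫ y, |G (v i - y) - η| ∂q) l (𝓝 0))
    {y₀ : ℝ} (hy₀ : y₀ ∈ q.support) : Tendsto (fun i => G (v i - y₀)) l (𝓝 η) := by
  rw [Metric.tendsto_nhds]
  intro ε hε
  obtain ⟨δ, hδ, hGδ⟩ := Metric.uniformContinuous_iff.1 hG (ε / 2) (half_pos hε)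
  have hball : 0 < q.real (Metric.ball y₀ δ) :=
    ENNReal.toReal_pos ((Measure.mem_support_iff_forall _).1 hy₀ _ (Metric.ball_mem_nhds _ hδ)).ne'
      (measure_ne_top _ _)
  filter_upwards [hv.eventually_lt_const (mul_pos hball (half_pos hε))] with i hi
  by_contra! hfar
  have hdev_int : Integrable (fun y => |G (v i - y) - η|) q := by
    have hGc := hG.continuous
    refine .of_bound (by fun_prop) (C + |η|) (.of_forall fun y => ?_)
    rw [Real.norm_eq_abs, abs_abs]
    exact (abs_sub _ _).trans (by linarith [hG_bound (v i - y)])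
  refine hi.not_ge ?_
  calc q.real (Metric.ball y₀ δ) * (ε / 2) = ∫ _ in Metric.ball y₀ δ, ε / 2 ∂q := by simp
    _ ≤ ∫ y in Metric.ball y₀ δ, |G (v i - y) - η| ∂q := by
      refine setIntegral_mono_on (integrable_const _) hdev_int.integrableOn measurableSet_ball
        fun y hy => ?_
      have hclose : dist (G (v i - y)) (G (v i - y₀)) < ε / 2 :=
        hGδ (by rwa [dist_sub_left])
      have := dist_triangle_left (G (v i - y₀)) η (G (v i - y))
      rw [← Real.dist_eq]
      linarith
    _ ≤ ∫ y, |G (v i - y) - η| ∂q :=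
      setIntegral_le_integral hdev_int (.of_forall fun y => abs_nonneg _)

variable [IsProbabilityMeasure q] [l.IsCountablyGenerated]

-- An average over `q` can only approach the asymptotic maximum `η` if `G` does so on the
-- whole support of `q`.
lemma tendsto_sub_of_mem_support (hG : UniformContinuous G) (hG_bound : ∀ u, |G u| ≤ C)
    (hren : Tendsto (fun u => G u - ∫ y, G (u - y) ∂q) atTop (𝓝 0))
    (hη : ∀ b > η, ∀ᶠ u in atTop, G u < b) (hv : Tendsto v l atTop)
    (hGv : Tendsto (fun i => G (v i)) l (𝓝 η)) {y₀ : ℝ} (hy₀ : y₀ ∈ q.support) :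
    Tendsto (fun i => G (v i - y₀)) l (𝓝 η) := by
  refine tendsto_sub_of_tendsto_integral_abs_sub hG hG_bound ?_ hy₀
  have hGc := hG.continuous
  refine tendsto_integral_abs_sub_of_posPart (fun i => by fun_prop) (integrable_const C)
    (fun i => .of_forall fun y => hG_bound _) (integrable_const η) (.of_forall fun y => ?_) ?_
  · have hvy : Tendsto (fun i => v i - y) l atTop := tendsto_atTop_add_const_right l (-y) hv
    refine tendsto_order.2 ⟨fun b hb => .of_forall fun i => hb.trans_le (le_max_right _ _),
      fun b hb => ?_⟩
    filter_upwards [hvy.eventually (hη (η + b) (by linarith))] with i hi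
    exact max_lt (by linarith) hb
  · simpa using hGv.sub (hren.comp hv)

lemma tendsto_sub_of_mem_closure_support (hG : UniformContinuous G) (hG_bound : ∀ u, |G u| ≤ C)
    (hren : Tendsto (fun u => G u - ∫ y, G (u - y) ∂q) atTop (𝓝 0))
    (hη : ∀ b > η, ∀ᶠ u in atTop, G u < b) (hv : Tendsto v l atTop)
    (hGv : Tendsto (fun i => G (v i)) l (𝓝 η)) {z : ℝ} (hz : z ∈ AddSubmonoid.closure q.support) :
    Tendsto (fun i => G (v i - z)) l (𝓝 η) := by
  induction hz using AddSubmonoid.closure_induction_right with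
  | zero => simpa using hGv
  | add_right x _ y hy ih =>
    simp only [← sub_sub]
    exact tendsto_sub_of_mem_support hG hG_bound hren hη
      (tendsto_atTop_add_const_right l (-x) hv) ih hy

lemma exists_forall_eventually_abs_sub_le (hq : ∀ᵐ y ∂q, 0 ≤ y) (hlat : ¬ IsLatticeMeasure q)
    (hG : UniformContinuous G) (hG_bound : ∀ u, |G u| ≤ C)
    (hren : Tendsto (fun u => G u - ∫ y, G (u - y) ∂q) atTop (𝓝 0))
    (hη : ∀ b > η, ∀ᶠ u in atTop, G u < b) (hv : Tendsto v l atTop)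
    (hGv : Tendsto (fun i => G (v i)) l (𝓝 η)) {ε : ℝ} (hε : 0 < ε) :
    ∃ R, ∀ s ≥ 0, ∀ᶠ i in l, |G (v i - R - s) - η| ≤ ε := by
  obtain ⟨δ, hδ, hGδ⟩ := Metric.uniformContinuous_iff.1 hG (ε / 2) (half_pos hε)
  have hsupp : ∀ y ∈ q.support, 0 ≤ y :=
    fun y hy => Measure.support_subset_of_isClosed isClosed_Ici hq hy
  obtain ⟨R, hR⟩ := exists_abs_sub_lt_of_dense_addSubgroup_closure hsupp
    (dense_addSubgroup_closure_support hlat) hδ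
  refine ⟨R, fun s hs => ?_⟩
  obtain ⟨z, hz, hzR⟩ := hR (R + s) (by linarith)
  have hGz := tendsto_sub_of_mem_closure_support hG hG_bound hren hη hv hGv hz
  filter_upwards [Metric.tendsto_nhds.1 hGz (ε / 2) (half_pos hε)] with i hi
  have hclose : dist (G (v i - R - s)) (G (v i - z)) < ε / 2 :=
    hGδ (by rwa [sub_sub, dist_sub_left, dist_comm, Real.dist_eq])
  rw [← Real.dist_eq]
  linarith [dist_triangle (G (v i - R - s)) (G (v i - z)) η]

lemma limsup_mul_measureReal_univ_eq (hq : ∀ᵐ y ∂q, 0 ≤ y) (hlat : ¬ IsLatticeMeasure q)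
    (hG : UniformContinuous G) (hG_bound : ∀ u, |G u| ≤ C)
    (hren : Tendsto (fun u => G u - ∫ y, G (u - y) ∂q) atTop (𝓝 0))
    {τ : Measure ℝ} [IsFiniteMeasure τ] (hτ : ∀ᵐ s ∂τ, 0 ≤ s) {H : ℝ}
    (hH : Tendsto (fun u => ∫ s, G (u - s) ∂τ) atTop (𝓝 H)) :
    limsup G atTop * τ.real univ = H := by
  have hle : IsBoundedUnder (· ≤ ·) atTop G :=
    isBoundedUnder_of ⟨C, fun u => (abs_le.1 (hG_bound u)).2⟩
  have hge : IsBoundedUnder (· ≥ ·) atTop G :=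
    isBoundedUnder_of ⟨-C, fun u => (abs_le.1 (hG_bound u)).1⟩
  obtain ⟨v, hGv, hv⟩ := exists_seq_tendsto_limsup (u := G) (f := atTop) hge.isCoboundedUnder_le hle
  have hbound : ∀ ε > 0, |H - limsup G atTop * τ.real univ| ≤ ε * τ.real univ := by
    intro ε hε
    obtain ⟨R, hR⟩ := exists_forall_eventually_abs_sub_le hq hlat hG hG_bound hren
      (fun b hb => eventually_lt_of_limsup_lt hb hle) hv hGv hε
    have hGc := hG.continuous
    exact abs_sub_mul_measureReal_univ_le (F := fun n s => G (v n - R - s))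
      (fun n => by fun_prop) (fun n => .of_forall fun s => hG_bound _) (hτ.mono hR)
      (hH.comp (tendsto_atTop_add_const_right atTop (-R) hv))
  have hlim : Tendsto (fun ε : ℝ => ε * τ.real univ) (𝓝[>] 0) (𝓝 0) :=
    tendsto_nhdsWithin_of_tendsto_nhds
      (by simpa using (continuous_mul_const (τ.real univ)).tendsto 0)
  have hzero : |H - limsup G atTop * τ.real univ| ≤ 0 :=
    ge_of_tendsto hlim (eventually_nhdsWithin_of_forall hbound)
  exact (sub_eq_zero.1 (abs_nonpos_iff.1 hzero)).symm

theorem tendsto_of_tendsto_sub_integral_sub (hq : ∀ᵐ y ∂q, 0 ≤ y) (hlat : ¬ IsLatticeMeasure q)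
    (hG : UniformContinuous G) (hG_bound : ∀ u, |G u| ≤ C)
    (hren : Tendsto (fun u => G u - ∫ y, G (u - y) ∂q) atTop (𝓝 0))
    {τ : Measure ℝ} [IsFiniteMeasure τ] [NeZero τ] (hτ : ∀ᵐ s ∂τ, 0 ≤ s) {H : ℝ}
    (hH : Tendsto (fun u => ∫ s, G (u - s) ∂τ) atTop (𝓝 H)) :
    Tendsto G atTop (𝓝 (H / τ.real univ)) := by
  have hτ_ne : τ.real univ ≠ 0 := measureReal_univ_ne_zero
  have hsup : limsup G atTop = H / τ.real univ :=
    eq_div_of_mul_eq hτ_ne (limsup_mul_measureReal_univ_eq hq hlat hG hG_bound hren hτ hH)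
  have hsup_neg : limsup (fun u => -G u) atTop = -H / τ.real univ := by
    refine eq_div_of_mul_eq hτ_ne (limsup_mul_measureReal_univ_eq (C := C) hq hlat hG.neg
      (by simpa using hG_bound) ?_ hτ ?_)
    · simpa [integral_neg, neg_add_eq_sub] using hren.neg
    · simpa [integral_neg] using hH.neg
  refine tendsto_order.2 ⟨fun b hb => ?_, fun b hb => ?_⟩
  · have : ∀ᶠ u in atTop, -G u < -b := eventually_lt_of_limsup_lt
      (by rw [hsup_neg, neg_div]; exact neg_lt_neg hb)
      (isBoundedUnder_of ⟨C, fun u => neg_le.1 (abs_le.1 (hG_bound u)).1⟩)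
    exact this.mono fun u => neg_lt_neg_iff.1
  · exact eventually_lt_of_limsup_lt (hsup.trans_lt hb)
      (isBoundedUnder_of ⟨C, fun u => (abs_le.1 (hG_bound u)).2⟩)

end Renewal

section AltEGF

open scoped Nat
open ProbabilityTheory

/-- The alternating exponential generating function `∑ (-t)^n / n! * c n` of a sequence `c`. -/
noncomputable def altEGF (c : ℕ → ℝ) (t : ℝ) : ℝ := ∑' n : ℕ, (-t) ^ n / (n ! : ℝ) * c n

variable {c d : ℕ → ℝ} {C D : ℝ}

lemma norm_altEGF_term_le (hc : ∀ n, |c n| ≤ C) (t : ℝ) (n : ℕ) :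
    ‖(-t) ^ n / (n ! : ℝ) * c n‖ ≤ |t| ^ n / (n ! : ℝ) * C := by
  rw [norm_mul, norm_div, norm_pow, norm_neg, Real.norm_natCast]
  exact mul_le_mul_of_nonneg_left (hc n) (by positivity)

lemma summable_altEGF (hc : ∀ n, |c n| ≤ C) (t : ℝ) :
    Summable fun n : ℕ => (-t) ^ n / (n ! : ℝ) * c n :=
  .of_norm_bounded ((Real.summable_pow_div_factorial |t|).mul_right C) (norm_altEGF_term_le hc t)

lemma abs_altEGF_le (hc : ∀ n, |c n| ≤ C) (t : ℝ) : |altEGF c t| ≤ Real.exp |t| * C := by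
  have hsum : HasSum (fun n : ℕ => |t| ^ n / (n ! : ℝ)) (Real.exp |t|) := by
    rw [Real.exp_eq_exp_ℝ]
    exact NormedSpace.expSeries_div_hasSum_exp |t|
  exact tsum_of_norm_bounded (hsum.mul_right C) (norm_altEGF_term_le hc t)

lemma altEGF_zero (c : ℕ → ℝ) : altEGF c 0 = c 0 := by
  rw [altEGF, tsum_eq_single 0 fun n hn => by simp [hn]]
  simp

lemma altEGF_single_zero (t : ℝ) : altEGF (Pi.single 0 1) t = 1 := by
  rw [altEGF, tsum_eq_single 0 fun n hn => by simp [hn]]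
  simp

lemma altEGF_sub (hc : ∀ n, |c n| ≤ C) (hd : ∀ n, |d n| ≤ D) (t : ℝ) :
    altEGF (fun n => c n - d n) t = altEGF c t - altEGF d t := by
  simp only [altEGF, mul_sub]
  exact (summable_altEGF hc t).tsum_sub (summable_altEGF hd t)

lemma altEGF_const_mul (a : ℝ) (c : ℕ → ℝ) (t : ℝ) :
    altEGF (fun n => a * c n) t = a * altEGF c t := by
  simp only [altEGF, ← tsum_mul_left, mul_left_comm a]

lemma altEGF_neg (c : ℕ → ℝ) (t : ℝ) : altEGF (fun n => -c n) t = -altEGF c t := by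
  simpa using altEGF_const_mul (-1) c t

lemma succ_mul_div_factorial_succ (x : ℝ) (n : ℕ) :
    ((n + 1 : ℕ) : ℝ) * x / ((n + 1)! : ℝ) = x / (n ! : ℝ) := by
  rw [Nat.factorial_succ, Nat.cast_mul, mul_div_mul_left _ _ (Nat.cast_ne_zero.2 n.succ_ne_zero)]

lemma tsum_deriv_altEGF_term (hc : ∀ n, |c n| ≤ C) (t : ℝ) :
    ∑' n : ℕ, -(n * (-t) ^ (n - 1)) / (n ! : ℝ) * c n = -altEGF (fun n => c (n + 1)) t := by
  have hshift (n : ℕ) : -((n + 1 : ℕ) * (-t) ^ (n + 1 - 1)) / ((n + 1)! : ℝ) * c (n + 1)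
      = -((-t) ^ n / (n ! : ℝ) * c (n + 1)) := by
    rw [neg_div, Nat.add_sub_cancel, succ_mul_div_factorial_succ, neg_mul]
  rw [tsum_eq_zero_add', altEGF, ← tsum_neg]
  · simp only [hshift, Nat.cast_zero, zero_mul, neg_zero, zero_div, zero_add]
  · simp only [hshift]
    exact (summable_altEGF (fun n => hc (n + 1)) t).neg

lemma hasDerivAt_altEGF (hc : ∀ n, |c n| ≤ C) (t : ℝ) :
    HasDerivAt (altEGF c) (-altEGF (fun n => c (n + 1)) t) t := by
  set R := |t| + 1
  rw [← tsum_deriv_altEGF_term hc]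
  refine hasDerivAt_tsum_of_isPreconnected (g := fun (n : ℕ) x => (-x) ^ n / (n ! : ℝ) * c n)
    (g' := fun (n : ℕ) x => -(n * (-x) ^ (n - 1)) / (n ! : ℝ) * c n)
    (u := fun n : ℕ => n * R ^ (n - 1) / (n ! : ℝ) * C) (t := Metric.ball 0 R) (y₀ := 0)
    ?_ Metric.isOpen_ball (convex_ball _ _).isPreconnected
    (fun n x _ => ?_) (fun n x hx => ?_) (Metric.mem_ball_self (by positivity))
    (summable_altEGF hc 0) (by simp [R])
  · rw [← summable_nat_add_iff 1]
    simpa only [Nat.add_sub_cancel, succ_mul_div_factorial_succ] using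
      (Real.summable_pow_div_factorial R).mul_right C
  · have hpow := (((hasDerivAt_neg x).pow n).div_const (n ! : ℝ)).mul_const (c n)
    exact hpow.congr_deriv (by ring)
  · have hxR : ‖x‖ ≤ R := (mem_ball_zero_iff.1 hx).le
    rw [norm_mul, norm_div, norm_neg, norm_mul, norm_pow, norm_neg, Real.norm_natCast,
      Real.norm_natCast]
    exact mul_le_mul (by gcongr) (hc n) (abs_nonneg _) (by positivity)

lemma continuous_altEGF (hc : ∀ n, |c n| ≤ C) : Continuous (altEGF c) :=
  continuous_iff_continuousAt.2 fun t => (hasDerivAt_altEGF hc t).continuousAt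

variable {q : Measure ℝ} {s : ℝ}

lemma exp_neg_mul_le_one (hs : 0 ≤ s) {y : ℝ} (hy : 0 ≤ y) : Real.exp (-s * y) ≤ 1 :=
  Real.exp_le_one_iff.2 (by nlinarith)

lemma integrable_exp_neg_mul [IsFiniteMeasure q] (hq : ∀ᵐ y ∂q, 0 ≤ y) (hs : 0 ≤ s) :
    Integrable (fun y => Real.exp (-s * y)) q := by
  refine .of_bound (by fun_prop) 1 ?_
  filter_upwards [hq] with y hy
  rw [Real.norm_eq_abs, Real.abs_exp]
  exact exp_neg_mul_le_one hs hy

variable [IsProbabilityMeasure q]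

lemma mgf_id_neg_le_one (hq : ∀ᵐ y ∂q, 0 ≤ y) (hs : 0 ≤ s) : mgf id q (-s) ≤ 1 := by
  calc mgf id q (-s) ≤ ∫ _, 1 ∂q :=
        integral_mono_ae (integrable_exp_neg_mul hq hs) (integrable_const 1)
          (hq.mono fun y => exp_neg_mul_le_one hs)
    _ = 1 := by simp

lemma abs_mul_mgf_id_neg_le (hq : ∀ᵐ y ∂q, 0 ≤ y) (hs : 0 ≤ s) (hc : ∀ n, |c n| ≤ C) (n : ℕ) :
    |c n * mgf id q (-(s + n))| ≤ C := by
  rw [abs_mul, abs_of_nonneg mgf_nonneg]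
  exact (mul_le_of_le_one_right (abs_nonneg _) (mgf_id_neg_le_one hq (by positivity))).trans (hc n)

lemma integrable_exp_mul_altEGF (hq : ∀ᵐ y ∂q, 0 ≤ y) (hs : 0 ≤ s) (hc : ∀ n, |c n| ≤ C) (t : ℝ) :
    Integrable (fun y => Real.exp (-s * y) * altEGF c (Real.exp (-y) * t)) q := by
  have hcont := continuous_altEGF hc
  refine (integrable_exp_neg_mul hq hs).mul_bdd (c := Real.exp |t| * C) (by fun_prop) ?_
  filter_upwards [hq] with y hy
  refine (abs_altEGF_le hc _).trans ?_
  have hC : 0 ≤ C := (abs_nonneg _).trans (hc 0)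
  rw [abs_mul, Real.abs_exp]
  gcongr
  exact mul_le_of_le_one_left (abs_nonneg t) (Real.exp_le_one_iff.2 (neg_nonpos.2 hy))

lemma integral_exp_mul_altEGF (hq : ∀ᵐ y ∂q, 0 ≤ y) (hs : 0 ≤ s) (hc : ∀ n, |c n| ≤ C) (t : ℝ) :
    ∫ y, Real.exp (-s * y) * altEGF c (Real.exp (-y) * t) ∂q
      = altEGF (fun n => c n * mgf id q (-(s + n))) t := by
  set a : ℕ → ℝ := fun n => (-t) ^ n / (n ! : ℝ) * c n
  have hterm (y : ℝ) : Real.exp (-s * y) * altEGF c (Real.exp (-y) * t)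
      = ∑' n : ℕ, a n * Real.exp (-(s + n) * y) := by
    rw [altEGF, ← tsum_mul_left]
    refine tsum_congr fun n => ?_
    have hexp : Real.exp (-(s + n) * y) = Real.exp (-s * y) * Real.exp (-y) ^ n := by
      rw [← Real.exp_nat_mul, ← Real.exp_add]
      ring_nf
    rw [hexp, ← mul_neg, mul_pow]
    ring
  have hint (n : ℕ) : Integrable (fun y => a n * Real.exp (-(s + n) * y)) q :=
    (integrable_exp_neg_mul hq (by positivity)).const_mul _
  have hsum : Summable fun n => ∫ y, ‖a n * Real.exp (-(s + n) * y)‖ ∂q := by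
    refine .of_nonneg_of_le (fun n => integral_nonneg fun y => norm_nonneg _) (fun n => ?_)
      (summable_altEGF hc t).norm
    simp only [norm_mul (a n), Real.norm_of_nonneg (Real.exp_pos _).le, integral_const_mul]
    exact mul_le_of_le_one_right (norm_nonneg _) (mgf_id_neg_le_one hq (by positivity))
  simp only [hterm, ← integral_tsum_of_summable_integral_norm hint hsum, integral_const_mul]
  exact tsum_congr fun n => mul_assoc _ _ _

end AltEGF

section GapSeries

open ProbabilityTheory

lemma pos_of_forall_add_deriv_nonneg {f f' : ℝ → ℝ} (hf : ∀ t, HasDerivAt f (f' t) t)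
    (h0 : 0 < f 0) (hstep : ∀ t ≥ 0, (∀ x ∈ Icc 0 t, 0 < f x) → 0 ≤ f t + f' t)
    {t : ℝ} (ht : 0 ≤ t) : 0 < f t := by
  by_contra! hft
  have hcont : Continuous f := continuous_iff_continuousAt.2 fun x => (hf x).continuousAt
  set Z : Set ℝ := Ici 0 ∩ f ⁻¹' Iic 0
  have hZ_bdd : BddBelow Z := ⟨0, fun x hx => hx.1⟩
  obtain ⟨hT_nonneg, hfT⟩ : sInf Z ∈ Z :=
    (isClosed_Ici.inter (isClosed_Iic.preimage hcont)).csInf_mem ⟨t, ht, hft⟩ hZ_bdd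
  set T := sInf Z
  have hpos : ∀ x, 0 ≤ x → x < T → 0 < f x := fun x hx hxT => by
    by_contra! hfx
    exact (csInf_le hZ_bdd ⟨hx, hfx⟩).not_gt hxT
  -- Before the first zero `T` of `f`, the function `exp * f` increases.
  have hderiv (x : ℝ) : HasDerivAt (fun x => Real.exp x * f x) (Real.exp x * (f x + f' x)) x :=
    ((Real.hasDerivAt_exp x).mul (hf x)).congr_deriv (mul_add _ _ _).symm
  have hmono : MonotoneOn (fun x => Real.exp x * f x) (Icc 0 T) := by
    refine monotoneOn_of_hasDerivWithinAt_nonneg (convex_Icc _ _) (by fun_prop)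
      (fun x _ => (hderiv x).hasDerivWithinAt) fun x hx => ?_
    rw [interior_Icc] at hx
    exact mul_nonneg (Real.exp_pos x).le (hstep x hx.1.le fun z hz =>
      hpos z hz.1 (hz.2.trans_lt hx.2))
  have h0T := hmono (left_mem_Icc.2 hT_nonneg) (right_mem_Icc.2 hT_nonneg) hT_nonneg
  simp only [Real.exp_zero, one_mul] at h0T
  exact (h0.trans_le h0T).not_ge (mul_nonpos_of_nonneg_of_nonpos (Real.exp_pos T).le hfT)

lemma deriv_mul_sub_le_sub_of_antitoneOn {f f' : ℝ → ℝ} (hf : ∀ x, HasDerivAt f (f' x) x)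
    (hf' : AntitoneOn f' (Ici 0)) {x y : ℝ} (hx : 0 ≤ x) (hxy : x ≤ y) :
    f' y * (y - x) ≤ f y - f x := by
  refine (convex_Icc x y).mul_sub_le_image_sub_of_le_deriv
    (fun z _ => (hf z).continuousAt.continuousWithinAt)
    (fun z _ => (hf z).differentiableAt.differentiableWithinAt) (fun z hz => ?_)
    x (left_mem_Icc.2 hxy) y (right_mem_Icc.2 hxy) hxy
  rw [interior_Icc] at hz
  rw [(hf z).deriv]
  exact hf' (hx.trans hz.1.le) (hx.trans hxy) hz.2.le

/-- One minus the Laplace transform of `q`. It is the function `ψ` of the measure `σ` when `q` is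
the law of `-α log x` under the probability measure `x ^ β* σ(dx)`, up to an affine change of
the argument. -/
noncomputable def laplaceGap (q : Measure ℝ) (s : ℝ) : ℝ := 1 - mgf id q (-s)

/-- The products `γ(n, ·)` of consecutive values of `laplaceGap q`, with unit shift. -/
noncomputable def gapProd (q : Measure ℝ) (s : ℝ) (n : ℕ) : ℝ :=
  ∏ i ∈ Finset.range n, laplaceGap q (s + i)

/-- The function `m(t, ·)` built from `laplaceGap q` in place of `ψ`. -/
noncomputable def gapSeries (q : Measure ℝ) (s t : ℝ) : ℝ := altEGF (gapProd q s) t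

/-- The coefficients of `gapPrimitive q`. -/
noncomputable def gapPrimitiveCoeff (q : Measure ℝ) : ℕ → ℝ
  | 0 => 0
  | n + 1 => -gapProd q 1 n

/-- The primitive of `gapSeries q 1` vanishing at `0`. It turns the branching equation into the
bound `gapSeries q 1 t = O(1 / t)` and evaluates the limit of `t * gapSeries q 1 t`. -/
noncomputable def gapPrimitive (q : Measure ℝ) : ℝ → ℝ := altEGF (gapPrimitiveCoeff q)

variable {q : Measure ℝ} {s t : ℝ}

lemma gapProd_succ (s : ℝ) (n : ℕ) :
    gapProd q s (n + 1) = gapProd q s n * laplaceGap q (s + n) :=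
  Finset.prod_range_succ _ n

lemma gapProd_succ' (s : ℝ) (n : ℕ) :
    gapProd q s (n + 1) = laplaceGap q s * gapProd q (s + 1) n := by
  simp only [gapProd, Finset.prod_range_succ', Nat.cast_add, Nat.cast_one, Nat.cast_zero, add_zero,
    add_assoc, add_comm (1 : ℝ), mul_comm]

lemma gapPrimitiveCoeff_mul_laplaceGap (n : ℕ) :
    gapPrimitiveCoeff q n * laplaceGap q n = (Pi.single 0 1 : ℕ → ℝ) n - gapProd q 1 n := by
  cases n with
  | zero => simp [gapPrimitiveCoeff, gapProd]
  | succ n =>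
    rw [gapProd_succ, Pi.single_eq_of_ne n.succ_ne_zero, zero_sub, gapPrimitiveCoeff,
      Nat.cast_succ, add_comm (n : ℝ), neg_mul]

lemma gapSeries_zero (s : ℝ) : gapSeries q s 0 = 1 := altEGF_zero _

variable [IsProbabilityMeasure q]

lemma laplaceGap_eq_integral (hq : ∀ᵐ y ∂q, 0 ≤ y) (hs : 0 ≤ s) :
    laplaceGap q s = ∫ y, (1 - Real.exp (-s * y)) ∂q := by
  rw [integral_sub (integrable_const 1) (integrable_exp_neg_mul hq hs)]
  simp [laplaceGap, mgf]

lemma laplaceGap_pos (hq : ∀ᵐ y ∂q, 0 ≤ y) (hne : ¬ ∀ᵐ y ∂q, y = 0) (hs : 0 < s) :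
    0 < laplaceGap q s := by
  have hnonneg : 0 ≤ᵐ[q] fun y => 1 - Real.exp (-s * y) :=
    hq.mono fun y hy => sub_nonneg.2 (exp_neg_mul_le_one hs.le hy)
  rw [laplaceGap_eq_integral hq hs.le]
  refine (integral_nonneg_of_ae hnonneg).lt_of_ne' fun hzero => hne ?_
  have hzero_ae := (integral_eq_zero_iff_of_nonneg_ae hnonneg
    ((integrable_const 1).sub (integrable_exp_neg_mul hq hs.le))).1 hzero
  filter_upwards [hzero_ae] with y hy
  simpa [hs.ne'] using (sub_eq_zero.1 hy).symm

lemma abs_laplaceGap_le_one (hq : ∀ᵐ y ∂q, 0 ≤ y) (hs : 0 ≤ s) : |laplaceGap q s| ≤ 1 := by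
  have hnonneg : 0 ≤ mgf id q (-s) := mgf_nonneg
  have hle := mgf_id_neg_le_one hq hs
  rw [laplaceGap, abs_le]
  constructor <;> linarith

lemma abs_gapProd_le_one (hq : ∀ᵐ y ∂q, 0 ≤ y) (hs : 0 ≤ s) (n : ℕ) : |gapProd q s n| ≤ 1 := by
  rw [gapProd, Finset.abs_prod]
  exact Finset.prod_le_one (fun i _ => abs_nonneg _) fun i _ =>
    abs_laplaceGap_le_one hq (by positivity)

lemma hasDerivAt_gapSeries (hq : ∀ᵐ y ∂q, 0 ≤ y) (hs : 0 ≤ s) (t : ℝ) :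
    HasDerivAt (gapSeries q s) (-(laplaceGap q s * gapSeries q (s + 1) t)) t := by
  refine (hasDerivAt_altEGF (abs_gapProd_le_one hq hs) t).congr_deriv ?_
  simp only [gapProd_succ', altEGF_const_mul, gapSeries]

-- Coefficientwise, `γ(n, s) (1 - φ(s + n)) = γ(n + 1, s) = ψ(s) γ(n, s + 1)`.
lemma gapSeries_sub_integral (hq : ∀ᵐ y ∂q, 0 ≤ y) (hs : 0 ≤ s) (t : ℝ) :
    gapSeries q s t - ∫ y, Real.exp (-s * y) * gapSeries q s (Real.exp (-y) * t) ∂q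
      = laplaceGap q s * gapSeries q (s + 1) t := by
  have hγ := abs_gapProd_le_one hq hs
  have hcoeff (n : ℕ) : gapProd q s n - gapProd q s n * mgf id q (-(s + n))
      = laplaceGap q s * gapProd q (s + 1) n := by
    rw [← gapProd_succ', gapProd_succ, laplaceGap]
    ring
  simp only [gapSeries]
  rw [integral_exp_mul_altEGF hq hs hγ, ← altEGF_sub hγ (abs_mul_mgf_id_neg_le hq hs hγ)]
  simp only [hcoeff, altEGF_const_mul]

lemma gapSeries_pos (hq : ∀ᵐ y ∂q, 0 ≤ y) (hs : 0 ≤ s) (ht : 0 ≤ t) : 0 < gapSeries q s t := by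
  refine pos_of_forall_add_deriv_nonneg (hasDerivAt_gapSeries hq hs)
    (by rw [gapSeries_zero]; exact one_pos) (fun t ht hpos => ?_) ht
  rw [← gapSeries_sub_integral hq hs, neg_sub, add_sub_cancel]
  refine integral_nonneg_of_ae ?_
  filter_upwards [hq] with y hy
  refine mul_nonneg (Real.exp_pos _).le (hpos _ ⟨by positivity, ?_⟩).le
  exact mul_le_of_le_one_left ht (Real.exp_le_one_iff.2 (neg_nonpos.2 hy))

lemma antitoneOn_gapSeries (hq : ∀ᵐ y ∂q, 0 ≤ y) (hne : ¬ ∀ᵐ y ∂q, y = 0) (hs : 0 < s) :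
    AntitoneOn (gapSeries q s) (Ici 0) := by
  refine antitoneOn_of_hasDerivWithinAt_nonpos (convex_Ici 0)
    (fun x _ => (hasDerivAt_gapSeries hq hs.le x).continuousAt.continuousWithinAt)
    (fun x _ => (hasDerivAt_gapSeries hq hs.le x).hasDerivWithinAt) fun x hx => ?_
  rw [interior_Ici] at hx
  exact neg_nonpos.2 (mul_pos (laplaceGap_pos hq hne hs)
    (gapSeries_pos hq (by positivity) (le_of_lt hx))).le

lemma abs_gapPrimitiveCoeff_le_one (hq : ∀ᵐ y ∂q, 0 ≤ y) (n : ℕ) :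
    |gapPrimitiveCoeff q n| ≤ 1 := by
  cases n with
  | zero => simp [gapPrimitiveCoeff]
  | succ n => simpa [gapPrimitiveCoeff] using abs_gapProd_le_one hq zero_le_one n

lemma hasDerivAt_gapPrimitive (hq : ∀ᵐ y ∂q, 0 ≤ y) (t : ℝ) :
    HasDerivAt (gapPrimitive q) (gapSeries q 1 t) t := by
  refine (hasDerivAt_altEGF (abs_gapPrimitiveCoeff_le_one hq) t).congr_deriv ?_
  simp only [gapPrimitiveCoeff, altEGF_neg, neg_neg, gapSeries]

lemma integrable_gapPrimitive (hq : ∀ᵐ y ∂q, 0 ≤ y) (t : ℝ) :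
    Integrable (fun y => gapPrimitive q (Real.exp (-y) * t)) q := by
  simpa [gapPrimitive] using
    integrable_exp_mul_altEGF hq le_rfl (abs_gapPrimitiveCoeff_le_one hq) t

lemma integral_gapPrimitive_sub (hq : ∀ᵐ y ∂q, 0 ≤ y) (t : ℝ) :
    ∫ y, (gapPrimitive q t - gapPrimitive q (Real.exp (-y) * t)) ∂q = 1 - gapSeries q 1 t := by
  have hc := abs_gapPrimitiveCoeff_le_one hq
  have hc_mgf (n : ℕ) : |gapPrimitiveCoeff q n * mgf id q (-n)| ≤ 1 := by
    simpa only [zero_add] using abs_mul_mgf_id_neg_le hq le_rfl hc n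
  have hsingle (n : ℕ) : |(Pi.single 0 1 : ℕ → ℝ) n| ≤ 1 := by
    rw [Pi.single_apply]
    split_ifs <;> simp
  have hint : ∫ y, gapPrimitive q (Real.exp (-y) * t) ∂q
      = altEGF (fun n => gapPrimitiveCoeff q n * mgf id q (-n)) t := by
    simpa only [gapPrimitive, neg_zero, zero_mul, Real.exp_zero, one_mul, zero_add] using
      integral_exp_mul_altEGF hq le_rfl hc t
  calc ∫ y, (gapPrimitive q t - gapPrimitive q (Real.exp (-y) * t)) ∂q
      = altEGF (fun n => gapPrimitiveCoeff q n * laplaceGap q n) t := by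
        rw [integral_sub (integrable_const _) (integrable_gapPrimitive hq t), integral_const,
          probReal_univ, one_smul, hint, gapPrimitive, ← altEGF_sub hc hc_mgf]
        simp only [laplaceGap, mul_one_sub]
    _ = altEGF (fun n => (Pi.single 0 1 : ℕ → ℝ) n - gapProd q 1 n) t := by
        simp only [gapPrimitiveCoeff_mul_laplaceGap]
    _ = 1 - gapSeries q 1 t := by
        rw [altEGF_sub hsingle (abs_gapProd_le_one hq zero_le_one), altEGF_single_zero, gapSeries]

lemma mul_gapSeries_one_le (hq : ∀ᵐ y ∂q, 0 ≤ y) (hne : ¬ ∀ᵐ y ∂q, y = 0) (ht : 0 ≤ t) :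
    t * gapSeries q 1 t * laplaceGap q 1 ≤ 1 := by
  calc t * gapSeries q 1 t * laplaceGap q 1
      = ∫ y, t * gapSeries q 1 t * (1 - Real.exp (-1 * y)) ∂q := by
        rw [integral_const_mul, laplaceGap_eq_integral hq zero_le_one]
    _ ≤ ∫ y, (gapPrimitive q t - gapPrimitive q (Real.exp (-y) * t)) ∂q := by
        refine integral_mono_ae
          (((integrable_const 1).sub (integrable_exp_neg_mul hq zero_le_one)).const_mul _)
          ((integrable_const _).sub (integrable_gapPrimitive hq t)) ?_
        filter_upwards [hq] with y hy
        have hle : Real.exp (-y) * t ≤ t :=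
          mul_le_of_le_one_left ht (Real.exp_le_one_iff.2 (neg_nonpos.2 hy))
        have hconcave := deriv_mul_sub_le_sub_of_antitoneOn (hasDerivAt_gapPrimitive hq)
          (antitoneOn_gapSeries hq hne one_pos) (by positivity) hle
        rw [neg_one_mul]
        linarith
    _ = 1 - gapSeries q 1 t := integral_gapPrimitive_sub hq t
    _ ≤ 1 := sub_le_self 1 (gapSeries_pos hq zero_le_one ht).le

lemma laplaceGap_mul_gapSeries_mul_half_le (hq : ∀ᵐ y ∂q, 0 ≤ y) (hne : ¬ ∀ᵐ y ∂q, y = 0)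
    (hs : 0 < s) (ht : 0 ≤ t) :
    laplaceGap q s * gapSeries q (s + 1) t * (t / 2) ≤ gapSeries q s (t / 2) := by
  have hanti : AntitoneOn (fun t => laplaceGap q s * gapSeries q (s + 1) t) (Ici 0) :=
    fun x hx y hy hxy => mul_le_mul_of_nonneg_left
      (antitoneOn_gapSeries hq hne (by positivity) hx hy hxy) (laplaceGap_pos hq hne hs).le
  have hconvex := deriv_mul_sub_le_sub_of_antitoneOn
    (fun x => (hasDerivAt_gapSeries hq hs.le x).neg.congr_deriv (neg_neg _)) hanti
    (by positivity) (half_le_self ht)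
  have hpos := gapSeries_pos hq hs.le ht
  simp only [Pi.neg_apply, sub_half] at hconvex
  linarith

lemma exists_forall_pow_mul_gapSeries_le (hq : ∀ᵐ y ∂q, 0 ≤ y) (hne : ¬ ∀ᵐ y ∂q, y = 0)
    {k : ℕ} (hk : 1 ≤ k) : ∃ C, ∀ t ≥ 0, t ^ k * gapSeries q k t ≤ C := by
  induction k, hk using Nat.le_induction with
  | base =>
    refine ⟨1 / laplaceGap q 1, fun t ht => ?_⟩
    rw [le_div_iff₀ (laplaceGap_pos hq hne one_pos), pow_one, Nat.cast_one]
    exact mul_gapSeries_one_le hq hne ht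
  | succ k hk ih =>
    obtain ⟨C, hC⟩ := ih
    have hk_pos : (0 : ℝ) < k := by positivity
    refine ⟨2 ^ (k + 1) * C / laplaceGap q k, fun t ht => ?_⟩
    rw [le_div_iff₀ (laplaceGap_pos hq hne hk_pos), Nat.cast_succ]
    calc t ^ (k + 1) * gapSeries q (k + 1) t * laplaceGap q k
        = 2 ^ (k + 1) * ((t / 2) ^ k * (laplaceGap q k * gapSeries q (k + 1) t * (t / 2))) := by
          rw [div_pow]
          field_simp
          ring
      _ ≤ 2 ^ (k + 1) * ((t / 2) ^ k * gapSeries q k (t / 2)) := by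
          gcongr
          exact laplaceGap_mul_gapSeries_mul_half_le hq hne hk_pos ht
      _ ≤ 2 ^ (k + 1) * C := by
          gcongr
          exact hC _ (by positivity)

end GapSeries

section LogScale

open scoped Topology

-- Barbalat's lemma.
lemma tendsto_zero_of_hasDerivAt_of_uniformContinuous {F F' : ℝ → ℝ} {c : ℝ}
    (hF : ∀ u, HasDerivAt F (F' u) u) (hF' : UniformContinuous F')
    (hlim : Tendsto F atTop (𝓝 c)) : Tendsto F' atTop (𝓝 0) := by
  rw [Metric.tendsto_nhds]
  intro ε hε
  obtain ⟨δ, hδ, hFδ⟩ := Metric.uniformContinuous_iff.1 hF' (ε / 2) (half_pos hε)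
  have hdiff : Tendsto (fun u => (F (u + δ / 2) - F u) / (δ / 2)) atTop (𝓝 0) := by
    simpa using ((hlim.comp (tendsto_atTop_add_const_right atTop (δ / 2) tendsto_id)).sub
      hlim).div_const (δ / 2)
  filter_upwards [Metric.tendsto_nhds.1 hdiff (ε / 2) (half_pos hε)] with u hu
  obtain ⟨ξ, ⟨huξ, hξu⟩, hslope⟩ := exists_hasDerivAt_eq_slope F F'
    (lt_add_of_pos_right u (half_pos hδ)) (fun x _ => (hF x).continuousAt.continuousWithinAt)
    fun x _ => hF x
  rw [add_sub_cancel_left] at hslope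
  rw [← hslope] at hu
  have hclose : dist (F' u) (F' ξ) < ε / 2 :=
    hFδ (by rw [Real.dist_eq, abs_sub_lt_iff]; constructor <;> linarith)
  linarith [dist_triangle (F' u) (F' ξ) 0]

/-- The function `t ^ k * gapSeries q k t` in the variable `u = log t`, in which the branching
equation becomes a renewal equation. -/
noncomputable def scaledGapSeries (q : Measure ℝ) (k : ℕ) (u : ℝ) : ℝ :=
  Real.exp u ^ k * gapSeries q k (Real.exp u)

variable {q : Measure ℝ} [IsProbabilityMeasure q] {k : ℕ}

lemma scaledGapSeries_nonneg (hq : ∀ᵐ y ∂q, 0 ≤ y) (k : ℕ) (u : ℝ) : 0 ≤ scaledGapSeries q k u :=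
  mul_nonneg (by positivity) (gapSeries_pos hq k.cast_nonneg (Real.exp_pos u).le).le

lemma exists_forall_abs_scaledGapSeries_le (hq : ∀ᵐ y ∂q, 0 ≤ y) (hne : ¬ ∀ᵐ y ∂q, y = 0)
    (hk : 1 ≤ k) : ∃ C, ∀ u, |scaledGapSeries q k u| ≤ C := by
  obtain ⟨C, hC⟩ := exists_forall_pow_mul_gapSeries_le hq hne hk
  refine ⟨C, fun u => ?_⟩
  rw [abs_of_nonneg (scaledGapSeries_nonneg hq k u)]
  exact hC _ (Real.exp_pos u).le

lemma hasDerivAt_scaledGapSeries (hq : ∀ᵐ y ∂q, 0 ≤ y) (k : ℕ) (u : ℝ) :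
    HasDerivAt (scaledGapSeries q k)
      (k * scaledGapSeries q k u - laplaceGap q k * scaledGapSeries q (k + 1) u) u := by
  have hpow : HasDerivAt (fun u => Real.exp u ^ k) (k * Real.exp u ^ k) u := by
    simpa only [← Real.exp_nat_mul, mul_comm, mul_one, id_eq] using
      ((hasDerivAt_id u).const_mul (k : ℝ)).exp
  have hseries := (hasDerivAt_gapSeries hq k.cast_nonneg (Real.exp u)).comp u
    (Real.hasDerivAt_exp u)
  refine (hpow.mul hseries).congr_deriv ?_
  simp only [scaledGapSeries, Nat.cast_succ, pow_succ, Function.comp_apply]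
  ring

lemma continuous_scaledGapSeries (hq : ∀ᵐ y ∂q, 0 ≤ y) (k : ℕ) :
    Continuous (scaledGapSeries q k) :=
  continuous_iff_continuousAt.2 fun u => (hasDerivAt_scaledGapSeries hq k u).continuousAt

lemma uniformContinuous_scaledGapSeries (hq : ∀ᵐ y ∂q, 0 ≤ y) (hne : ¬ ∀ᵐ y ∂q, y = 0)
    (hk : 1 ≤ k) : UniformContinuous (scaledGapSeries q k) := by
  obtain ⟨C, hC⟩ := exists_forall_abs_scaledGapSeries_le hq hne hk
  obtain ⟨D, hD⟩ := exists_forall_abs_scaledGapSeries_le hq hne k.succ_pos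
  have hbound (u : ℝ) : ‖deriv (scaledGapSeries q k) u‖ ≤ k * C + D := by
    rw [(hasDerivAt_scaledGapSeries hq k u).deriv]
    refine (norm_sub_le _ _).trans (add_le_add ?_ ?_)
    · rw [norm_mul, Real.norm_natCast]
      exact mul_le_mul_of_nonneg_left (hC u) k.cast_nonneg
    · rw [norm_mul]
      exact (mul_le_of_le_one_left (norm_nonneg _) (abs_laplaceGap_le_one hq k.cast_nonneg)).trans
        (hD u)
  exact (lipschitzWith_of_nnnorm_deriv_le (C := (k * C + D).toNNReal)
    (fun u => (hasDerivAt_scaledGapSeries hq k u).differentiableAt)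
    fun u => NNReal.le_toNNReal_of_coe_le (hbound u)).uniformContinuous

lemma tendsto_scaledGapSeries_succ (hq : ∀ᵐ y ∂q, 0 ≤ y) (hne : ¬ ∀ᵐ y ∂q, y = 0)
    (hk : 1 ≤ k) {c : ℝ} (hlim : Tendsto (scaledGapSeries q k) atTop (𝓝 c)) :
    Tendsto (scaledGapSeries q (k + 1)) atTop (𝓝 (k * c / laplaceGap q k)) := by
  have hderiv := tendsto_zero_of_hasDerivAt_of_uniformContinuous (hasDerivAt_scaledGapSeries hq k)
    (((uniformContinuous_scaledGapSeries hq hne hk).const_smul (k : ℝ)).sub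
      ((uniformContinuous_scaledGapSeries hq hne k.succ_pos).const_smul (laplaceGap q k))) hlim
  have hgap : laplaceGap q k ≠ 0 := (laplaceGap_pos hq hne (by positivity)).ne'
  simpa [hgap] using ((hlim.const_mul (k : ℝ)).sub hderiv).div_const (laplaceGap q k)

lemma tendsto_exp_neg_mul_scaledGapSeries (hq : ∀ᵐ y ∂q, 0 ≤ y) (hne : ¬ ∀ᵐ y ∂q, y = 0)
    (hk : 1 ≤ k) : Tendsto (fun u => Real.exp (-u) * scaledGapSeries q k u) atTop (𝓝 0) := by
  obtain ⟨C, hC⟩ := exists_forall_abs_scaledGapSeries_le hq hne hk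
  exact Real.tendsto_exp_neg_atTop_nhds_zero.zero_mul_isBoundedUnder_le
    (isBoundedUnder_of ⟨C, hC⟩)

lemma scaledGapSeries_one_sub_integral (hq : ∀ᵐ y ∂q, 0 ≤ y) (u : ℝ) :
    scaledGapSeries q 1 u - ∫ y, scaledGapSeries q 1 (u - y) ∂q
      = laplaceGap q 1 * (Real.exp (-u) * scaledGapSeries q 2 u) := by
  have hshift (y : ℝ) : scaledGapSeries q 1 (u - y)
      = Real.exp u * (Real.exp (-1 * y) * gapSeries q 1 (Real.exp (-y) * Real.exp u)) := by
    rw [scaledGapSeries, sub_eq_neg_add, Real.exp_add, pow_one, Nat.cast_one, neg_one_mul]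
    ring
  have hexp : Real.exp (-u) * Real.exp u = 1 := by
    rw [← Real.exp_add, neg_add_cancel, Real.exp_zero]
  simp only [hshift, integral_const_mul]
  rw [scaledGapSeries, pow_one, Nat.cast_one, ← mul_sub, gapSeries_sub_integral hq zero_le_one,
    scaledGapSeries, Nat.cast_two, one_add_one_eq_two]
  linear_combination
    -(laplaceGap q 1 * Real.exp u * gapSeries q 2 (Real.exp u)) * hexp

end LogScale

section IntegratedTail

open scoped Topology

/-- The measure `q (s, ∞) ds` on `(0, ∞)`: the unnormalized law of the delay that makes a renewal
process with step law `q` stationary. -/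
noncomputable def integratedTail (q : Measure ℝ) : Measure ℝ :=
  (volume.restrict (Ioi 0)).withDensity fun s => q (Ioi s)

variable {q : Measure ℝ}

lemma ae_integratedTail_nonneg : ∀ᵐ s ∂integratedTail q, 0 ≤ s :=
  (withDensity_absolutelyContinuous _ _).ae_le <|
    (ae_restrict_mem measurableSet_Ioi).mono fun _ hs => le_of_lt hs

lemma lintegral_integratedTail (hq : ∀ᵐ y ∂q, 0 ≤ y) {g : ℝ → ℝ} (hg_meas : Measurable g)
    (hg_int : ∀ a b, IntervalIntegrable g volume a b) (hg_nonneg : ∀ s, 0 ≤ g s) :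
    ∫⁻ s, ENNReal.ofReal (g s) ∂integratedTail q
      = ∫⁻ y, ENNReal.ofReal (∫ s in 0..y, g s) ∂q := by
  have hmeas : Measurable fun s => q (Ioi s) :=
    (show Antitone fun s => q (Ioi s) from
      fun _ _ hst => measure_mono (Ioi_subset_Ioi hst)).measurable
  rw [integratedTail, lintegral_withDensity_eq_lintegral_mul _ hmeas hg_meas.ennreal_ofReal,
    lintegral_comp_eq_lintegral_meas_lt_mul q hq aemeasurable_id (fun t _ => hg_int 0 t)
      (.of_forall hg_nonneg)]
  rfl

lemma integral_integratedTail (hq : ∀ᵐ y ∂q, 0 ≤ y) {g : ℝ → ℝ} (hg_meas : Measurable g)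
    (hg_int : ∀ a b, IntervalIntegrable g volume a b) (hg_nonneg : ∀ s, 0 ≤ g s) :
    ∫ s, g s ∂integratedTail q = ∫ y, (∫ s in 0..y, g s) ∂q := by
  rw [integral_eq_lintegral_of_nonneg_ae (.of_forall hg_nonneg) hg_meas.aestronglyMeasurable,
    integral_eq_lintegral_of_nonneg_ae
      (hq.mono fun y hy => intervalIntegral.integral_nonneg hy fun s _ => hg_nonneg s)
      (intervalIntegral.continuous_primitive hg_int 0).aestronglyMeasurable,
    lintegral_integratedTail hq hg_meas hg_int hg_nonneg]

lemma measureReal_univ_integratedTail (hq : ∀ᵐ y ∂q, 0 ≤ y) :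
    (integratedTail q).real univ = ∫ y, y ∂q := by
  simpa using integral_integratedTail hq (measurable_const (a := (1 : ℝ)))
    (fun _ _ => intervalIntegrable_const) fun _ => zero_le_one

lemma isFiniteMeasure_integratedTail (hq : ∀ᵐ y ∂q, 0 ≤ y) (hint : Integrable (fun y => y) q) :
    IsFiniteMeasure (integratedTail q) := by
  refine ⟨?_⟩
  have huniv : integratedTail q univ = ∫⁻ y, ENNReal.ofReal y ∂q := by
    simpa using lintegral_integratedTail hq (measurable_const (a := (1 : ℝ)))
      (fun _ _ => intervalIntegrable_const) fun _ => zero_le_one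
  rw [huniv]
  exact hint.lintegral_lt_top

variable [IsProbabilityMeasure q]

lemma intervalIntegral_scaledGapSeries_one (hq : ∀ᵐ y ∂q, 0 ≤ y) (u y : ℝ) :
    ∫ s in 0..y, scaledGapSeries q 1 (u - s)
      = gapPrimitive q (Real.exp u) - gapPrimitive q (Real.exp (-y) * Real.exp u) := by
  have hderiv (s : ℝ) : HasDerivAt (fun s => -gapPrimitive q (Real.exp (u - s)))
      (scaledGapSeries q 1 (u - s)) s := by
    refine ((hasDerivAt_gapPrimitive hq _).comp s
      ((hasDerivAt_id s).const_sub u).exp).neg.congr_deriv ?_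
    simp only [scaledGapSeries, pow_one, Nat.cast_one, id_eq]
    ring
  have hcont : Continuous fun s => scaledGapSeries q 1 (u - s) :=
    (continuous_scaledGapSeries hq 1).comp (by fun_prop)
  rw [intervalIntegral.integral_eq_sub_of_hasDerivAt (fun s _ => hderiv s)
    (hcont.intervalIntegrable _ _), sub_zero, ← Real.exp_add, neg_add_eq_sub, neg_sub_neg]

lemma integral_scaledGapSeries_one_integratedTail (hq : ∀ᵐ y ∂q, 0 ≤ y) (u : ℝ) :
    ∫ s, scaledGapSeries q 1 (u - s) ∂integratedTail q
      = 1 - Real.exp (-u) * scaledGapSeries q 1 u := by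
  have hcont : Continuous fun s => scaledGapSeries q 1 (u - s) :=
    (continuous_scaledGapSeries hq 1).comp (by fun_prop)
  rw [integral_integratedTail hq hcont.measurable (fun a b => hcont.intervalIntegrable a b)
    fun s => scaledGapSeries_nonneg hq 1 _]
  simp only [intervalIntegral_scaledGapSeries_one hq, integral_gapPrimitive_sub hq]
  simp only [scaledGapSeries, pow_one, Nat.cast_one, ← mul_assoc, ← Real.exp_add, neg_add_cancel,
    Real.exp_zero, one_mul]

lemma tendsto_scaledGapSeries_one (hq : ∀ᵐ y ∂q, 0 ≤ y) (hlat : ¬ IsLatticeMeasure q)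
    (hint : Integrable (fun y => y) q) :
    Tendsto (scaledGapSeries q 1) atTop (𝓝 (1 / ∫ y, y ∂q)) := by
  have hne := not_ae_eq_zero_of_not_isLatticeMeasure hlat
  obtain ⟨C, hC⟩ := exists_forall_abs_scaledGapSeries_le hq hne le_rfl
  have := isFiniteMeasure_integratedTail hq hint
  have hmean : 0 < ∫ y, y ∂q := (integral_nonneg_of_ae hq).lt_of_ne' fun hzero =>
    hne ((integral_eq_zero_iff_of_nonneg_ae hq hint).1 hzero)
  have : NeZero (integratedTail q) := ⟨fun hzero => hmean.ne' <| by
    rw [← measureReal_univ_integratedTail hq, hzero, measureReal_zero, Pi.zero_apply]⟩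
  rw [← measureReal_univ_integratedTail hq]
  refine tendsto_of_tendsto_sub_integral_sub hq hlat
    (uniformContinuous_scaledGapSeries hq hne le_rfl) hC ?_ ae_integratedTail_nonneg ?_
  · simpa only [scaledGapSeries_one_sub_integral hq, mul_zero] using
      (tendsto_exp_neg_mul_scaledGapSeries hq hne one_le_two).const_mul (laplaceGap q 1)
  · simpa only [integral_scaledGapSeries_one_integratedTail hq, sub_zero] using
      (tendsto_exp_neg_mul_scaledGapSeries hq hne le_rfl).const_sub 1

lemma tendsto_scaledGapSeries (hq : ∀ᵐ y ∂q, 0 ≤ y) (hlat : ¬ IsLatticeMeasure q)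
    (hint : Integrable (fun y => y) q) {k : ℕ} (hk : 1 ≤ k) :
    Tendsto (scaledGapSeries q k) atTop (𝓝 (((k - 1).factorial : ℝ) / (∫ y, y ∂q)
      * ∏ j ∈ Finset.Icc 1 (k - 1), (laplaceGap q j)⁻¹)) := by
  induction k, hk using Nat.le_induction with
  | base => simpa using tendsto_scaledGapSeries_one hq hlat hint
  | succ k hk ih =>
    convert tendsto_scaledGapSeries_succ hq (not_ae_eq_zero_of_not_isLatticeMeasure hlat) hk ih
      using 2
    obtain ⟨n, rfl⟩ := Nat.exists_eq_add_of_le' hk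
    simp only [Nat.add_sub_cancel]
    rw [Finset.prod_Icc_succ_top (by omega), Nat.factorial_succ]
    push_cast
    ring

theorem tendsto_pow_mul_gapSeries (hq : ∀ᵐ y ∂q, 0 ≤ y) (hlat : ¬ IsLatticeMeasure q)
    (hint : Integrable (fun y => y) q) {k : ℕ} (hk : 1 ≤ k) :
    Tendsto (fun t => t ^ k * gapSeries q k t) atTop (𝓝 (((k - 1).factorial : ℝ) / (∫ y, y ∂q)
      * ∏ j ∈ Finset.Icc 1 (k - 1), (laplaceGap q j)⁻¹)) := by
  refine ((tendsto_scaledGapSeries hq hlat hint hk).comp Real.tendsto_log_atTop).congr' ?_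
  filter_upwards [eventually_gt_atTop 0] with t ht
  simp only [Function.comp_apply, scaledGapSeries, Real.exp_log ht]

end IntegratedTail

section SizeBiasedLogLaw

open ProbabilityTheory

/-- The law of `-α log x` when `x` is drawn from `(0, 1]` according to `x ^ β σ(dx)`. This turns
the Mellin transform of `σ` into a Laplace transform and `α` into a unit shift. -/
noncomputable def sizeBiasedLogLaw (σ : Measure ℝ) (α β : ℝ) : Measure ℝ :=
  ((σ.restrict (Ioc 0 1)).withDensity fun x => ENNReal.ofReal (x ^ β)).map
    fun x => -(α * Real.log x)

variable {σ : Measure ℝ} {α β : ℝ}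

lemma ae_sizeBiasedLogLaw_iff {p : ℝ → Prop} (hp : MeasurableSet {y | p y}) :
    (∀ᵐ y ∂sizeBiasedLogLaw σ α β, p y)
      ↔ ∀ᵐ x ∂σ.restrict (Ioc 0 1), p (-(α * Real.log x)) := by
  rw [sizeBiasedLogLaw, ae_map_iff (by fun_prop) hp, ae_withDensity_iff (by fun_prop)]
  refine eventually_congr ?_
  filter_upwards [ae_restrict_mem measurableSet_Ioc] with x hx
  simp [Real.rpow_pos_of_pos hx.1 β]

lemma ae_sizeBiasedLogLaw_nonneg (hα : 0 ≤ α) : ∀ᵐ y ∂sizeBiasedLogLaw σ α β, 0 ≤ y := by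
  rw [ae_sizeBiasedLogLaw_iff measurableSet_Ici]
  filter_upwards [ae_restrict_mem measurableSet_Ioc] with x hx
  exact neg_nonneg.2 (mul_nonpos_of_nonneg_of_nonpos hα (Real.log_nonpos hx.1.le hx.2))

lemma isProbabilityMeasure_sizeBiasedLogLaw
    (hβ : ∫⁻ x in Ioc (0 : ℝ) 1, ENNReal.ofReal (x ^ β) ∂σ = 1) :
    IsProbabilityMeasure (sizeBiasedLogLaw σ α β) := by
  refine ⟨?_⟩
  rw [sizeBiasedLogLaw, Measure.map_apply (by fun_prop) .univ, preimage_univ,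
    withDensity_apply _ .univ, Measure.restrict_univ, hβ]

lemma toReal_ofReal_rpow_smul_ae_eq (g : ℝ → ℝ) :
    (fun x => (ENNReal.ofReal (x ^ β)).toReal • g x)
      =ᵐ[σ.restrict (Ioc 0 1)] fun x => x ^ β * g x := by
  filter_upwards [ae_restrict_mem measurableSet_Ioc] with x hx
  rw [ENNReal.toReal_ofReal (Real.rpow_nonneg hx.1.le β), smul_eq_mul]

lemma integral_sizeBiasedLogLaw {f : ℝ → ℝ} (hf : Measurable f) :
    ∫ y, f y ∂sizeBiasedLogLaw σ α β
      = ∫ x in Ioc (0 : ℝ) 1, x ^ β * f (-(α * Real.log x)) ∂σ := by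
  rw [sizeBiasedLogLaw, integral_map (by fun_prop) hf.aestronglyMeasurable,
    integral_withDensity_eq_integral_toReal_smul (by fun_prop)
      (.of_forall fun x => ENNReal.ofReal_lt_top)]
  exact integral_congr_ae (toReal_ofReal_rpow_smul_ae_eq _)

lemma integral_id_sizeBiasedLogLaw :
    ∫ y, y ∂sizeBiasedLogLaw σ α β
      = α * ∫ x in Ioc (0 : ℝ) 1, -Real.log x * x ^ β ∂σ := by
  rw [integral_sizeBiasedLogLaw (f := fun y => y) measurable_id, ← integral_const_mul]
  congr with x
  ring

lemma integrable_id_sizeBiasedLogLaw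
    (hlog : IntegrableOn (fun x => -Real.log x * x ^ β) (Ioc 0 1) σ) :
    Integrable (fun y => y) (sizeBiasedLogLaw σ α β) := by
  rw [sizeBiasedLogLaw, integrable_map_measure (by fun_prop) (by fun_prop),
    integrable_withDensity_iff_integrable_smul' (by fun_prop)
      (.of_forall fun x => ENNReal.ofReal_lt_top)]
  refine (hlog.const_mul α).congr ((toReal_ofReal_rpow_smul_ae_eq _).trans ?_).symm
  refine .of_forall fun x => ?_
  simp only [Function.comp_apply]
  ring

lemma laplaceGap_sizeBiasedLogLaw (s : ℝ) :
    laplaceGap (sizeBiasedLogLaw σ α β) s = psiR σ (β + α * s) := by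
  rw [laplaceGap, mgf, integral_sizeBiasedLogLaw (by fun_prop), psiR, mellinR]
  congr 1
  refine setIntegral_congr_fun measurableSet_Ioc fun x hx => ?_
  simp only [id_eq, Real.rpow_add hx.1, Real.rpow_def_of_pos hx.1 (α * s)]
  ring_nf

lemma gapSeries_sizeBiasedLogLaw (s t : ℝ) :
    gapSeries (sizeBiasedLogLaw σ α β) s t = mSeriesR σ α (β + α * s) t := by
  simp only [gapSeries, altEGF, gapProd, laplaceGap_sizeBiasedLogLaw, mSeriesR, mul_add, add_assoc]

lemma IsLatticeMeasure.exists_pos {q : Measure ℝ} (hq : IsLatticeMeasure q) :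
    ∃ d > 0, ∀ᵐ y ∂q, y ∈ AddSubgroup.zmultiples d := by
  obtain ⟨d, hd⟩ := hq
  rcases lt_trichotomy d 0 with hneg | rfl | hpos
  · exact ⟨-d, neg_pos.2 hneg, by simpa only [AddSubgroup.zmultiples_neg] using hd⟩
  · refine ⟨1, one_pos, hd.mono fun y hy => ?_⟩
    rw [AddSubgroup.zmultiples_zero_eq_bot] at hy
    exact bot_le (a := AddSubgroup.zmultiples (1 : ℝ)) hy
  · exact ⟨d, hpos, hd⟩

lemma not_isLatticeMeasure_sizeBiasedLogLaw (hα : 0 < α) (hσ : ¬ IsArithmeticMeasure σ) :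
    ¬ IsLatticeMeasure (sizeBiasedLogLaw σ α β) := by
  intro hlat
  obtain ⟨d, hd, hlat⟩ := hlat.exists_pos
  have hlat_log := (ae_sizeBiasedLogLaw_iff (p := (· ∈ AddSubgroup.zmultiples d))
    (countable_range fun n : ℤ => n • d).measurableSet).1 hlat
  refine hσ ⟨Real.exp (-(d / α)),
    ⟨Real.exp_pos _, Real.exp_lt_one_iff.2 (neg_lt_zero.2 (by positivity))⟩, ?_⟩
  rw [ae_restrict_iff' measurableSet_Ioc] at hlat_log
  refine measure_mono_null ?_ (ae_iff.1 hlat_log)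
  rintro x ⟨hx, hxr⟩ hmem
  refine hxr ?_
  obtain ⟨n, hn⟩ := AddSubgroup.mem_zmultiples_iff.1 (hmem hx)
  rw [zsmul_eq_mul] at hn
  have hlog : Real.log x ≤ 0 := Real.log_nonpos hx.1.le hx.2
  have hn_nonneg : 0 ≤ n := by
    have : 0 ≤ (n : ℝ) * d := hn ▸ neg_nonneg.2 (mul_nonpos_of_nonneg_of_nonpos hα.le hlog)
    exact_mod_cast nonneg_of_mul_nonneg_left this hd
  lift n to ℕ using hn_nonneg
  refine ⟨n, ?_⟩
  rw [← Real.exp_nat_mul, ← Real.exp_log hx.1, Real.exp_eq_exp]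
  field_simp
  push_cast at hn
  linarith

lemma integrableOn_neg_log_mul_rpow {b : ℝ} (hb : b < β)
    (hfin : ∫⁻ x in Ioc (0 : ℝ) 1, ENNReal.ofReal (x ^ b) ∂σ < ⊤) :
    IntegrableOn (fun x => -Real.log x * x ^ β) (Ioc 0 1) σ := by
  have hpow : IntegrableOn (fun x => x ^ b) (Ioc 0 1) σ := by
    refine (lintegral_ofReal_ne_top_iff_integrable (by fun_prop) ?_).1 hfin.ne
    filter_upwards [ae_restrict_mem measurableSet_Ioc] with x hx
    exact Real.rpow_nonneg hx.1.le b
  refine (hpow.const_mul (1 / (β - b))).mono' (by fun_prop) ?_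
  filter_upwards [ae_restrict_mem measurableSet_Ioc] with x hx
  have hx_pow : 0 ≤ x ^ b := Real.rpow_nonneg hx.1.le b
  calc ‖-Real.log x * x ^ β‖ = ‖Real.log x * x ^ (β - b) * x ^ b‖ := by
        rw [mul_assoc, ← Real.rpow_add hx.1, sub_add_cancel, neg_mul, norm_neg]
    _ = |Real.log x * x ^ (β - b)| * x ^ b := by
        rw [norm_mul, Real.norm_of_nonneg hx_pow, Real.norm_eq_abs]
    _ ≤ 1 / (β - b) * x ^ b := by
        gcongr
        exact (Real.abs_log_mul_self_rpow_lt x (β - b) hx.1 hx.2 (sub_pos.2 hb)).le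

end SizeBiasedLogLaw

theorem mean_power_sum_asymptotics_at_integer_shifts_general
    {σ : Measure ℝ} {α : ℝ} (hα : 0 < α) (hnonarith : ¬ IsArithmeticMeasure σ)
    {βs : ℝ} (hβs : ∫⁻ x in Ioc (0 : ℝ) 1, ENNReal.ofReal (x ^ βs) ∂σ = 1)
    (hlog : IntegrableOn (fun x => -Real.log x * x ^ βs) (Ioc 0 1) σ) :
    (∀ j : ℕ, 1 ≤ j → 0 < psiR σ (βs + α * j)) ∧
    (∀ k : ℕ, 1 ≤ k →
      Tendsto (fun t : ℝ => t ^ k * mSeriesR σ α (βs + α * k) t) atTop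
        (nhds ((((k - 1).factorial : ℝ) / (α * ∫ x in Ioc (0 : ℝ) 1, (-Real.log x) * x ^ βs ∂σ))
          * ∏ j ∈ Finset.Icc 1 (k - 1), (psiR σ (βs + α * j))⁻¹))) := by
  have := isProbabilityMeasure_sizeBiasedLogLaw (α := α) hβs
  have hq : ∀ᵐ y ∂sizeBiasedLogLaw σ α βs, 0 ≤ y := ae_sizeBiasedLogLaw_nonneg hα.le
  have hlat : ¬ IsLatticeMeasure (sizeBiasedLogLaw σ α βs) :=
    not_isLatticeMeasure_sizeBiasedLogLaw hα hnonarith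
  refine ⟨fun j hj => ?_, fun k hk => ?_⟩
  · rw [← laplaceGap_sizeBiasedLogLaw]
    exact laplaceGap_pos hq (not_ae_eq_zero_of_not_isLatticeMeasure hlat) (by positivity)
  · simpa only [gapSeries_sizeBiasedLogLaw, laplaceGap_sizeBiasedLogLaw,
      integral_id_sizeBiasedLogLaw] using
      tendsto_pow_mul_gapSeries hq hlat (integrable_id_sizeBiasedLogLaw hlog) hk

/-- Under the Malthusian hypotheses (`σ` nonarithmetic, `σ((0,1]) > 1`,
`σ({1}) < 1`, `α > 0`, `φ(β*) = 1` with `β* > 0` and `β* > β_a`), for every integer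
`k ≥ 1` the factors `ψ(β*+αj)`, `1 ≤ j`, are strictly positive and
`t^k·m(t,β*+αk) → ((k−1)!/(αψ'(β*)))·∏_{j=1}^{k−1} ψ(β*+αj)⁻¹` as `t → ∞`,
where `ψ'(β*) = ∫ (−log x)·x^{β*} σ(dx)`. -/
theorem mean_power_sum_asymptotics_at_integer_shifts
    (σ : Measure ℝ) (α : ℝ) (hα : 0 < α)
    (hnonarith : ¬ IsArithmeticMeasure σ)
    (hsup : 1 < σ (Ioc (0:ℝ) 1)) (h1 : σ {(1:ℝ)} < 1)
    (βs : ℝ) (hβs_pos : 0 < βs)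
    (hβs : ∫⁻ x in Ioc (0:ℝ) 1, ENNReal.ofReal (x ^ βs) ∂σ = 1)
    (hβsa : ∃ b < βs, ∫⁻ x in Ioc (0:ℝ) 1, ENNReal.ofReal (x ^ b) ∂σ < ⊤) :
    (∀ j : ℕ, 1 ≤ j → 0 < psiR σ (βs + α * j)) ∧
    (∀ k : ℕ, 1 ≤ k →
      Tendsto (fun t : ℝ => t ^ k * mSeriesR σ α (βs + α * k) t) atTop
        (nhds ((((k - 1).factorial : ℝ) / (α * ∫ x in Ioc (0:ℝ) 1, (-Real.log x) * x ^ βs ∂σ))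
          * ∏ j ∈ Finset.Icc 1 (k - 1), (psiR σ (βs + α * j))⁻¹))) := by
  obtain ⟨b, hb, hfin⟩ := hβsa
  exact mean_power_sum_asymptotics_at_integer_shifts_general hα hnonarith hβs
    (integrableOn_neg_log_mul_rpow hb hfin)
end

section
/- Let σ be a Borel measure on (0,1] with σ({1}) < 1, let α > 0, and let β* be a real number with φ(β*) = 1 and c := ∫_{(0,1]} (−log x)·x^{β*} σ(dx) ∈ (0,∞). Define the moment sequence m_k = ((k−1)!/(α·c)) · ∏_{j=1}^{k−1} ψ(β*+αj)^{−1} for k = 1, 2, .... Then the corresponding moment problem is determinate in the following sense: if ρ₁ and ρ₂ are two probability measures on [0,∞) such that ∫_{[0,∞)} x^{αk} ρ_i(dx) = m_k for every integer k ≥ 1 and i = 1, 2, then ρ₁ = ρ₂. -/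
open MeasureTheory Set

/-!
With `p = ψ(β + α)`, monotonicity of `ψ` bounds the `k`-th moment by a multiple of `k! / p ^ k`, so
`∫ exp (t * x ^ α) ∂ρ` is finite for `t < p`. The complex moment generating function of `x ^ α` is
therefore analytic in a strip around the imaginary axis, where its Taylor coefficients at `0` (the
moments) determine it. Its values on the imaginary axis are the characteristic function of the law
of `x ^ α`, and `x ↦ x ^ α` is injective on `[0, ∞)`.
-/

section MomentProblem

open ProbabilityTheory Filter Topology

variable {Ω Ω' : Type*} {mΩ : MeasurableSpace Ω} {mΩ' : MeasurableSpace Ω'}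
  {μ : Measure Ω} {μ' : Measure Ω'} {X : Ω → ℝ} {Y : Ω' → ℝ}

lemma ofReal_exp_mul_abs {t : ℝ} (ht : 0 ≤ t) (x : ℝ) :
    ENNReal.ofReal (Real.exp (t * |x|)) =
      ∑' k : ℕ, ENNReal.ofReal (t ^ k / k.factorial) * ‖x‖ₑ ^ k := by
  rw [Real.exp_eq_exp_ℝ, NormedSpace.exp_eq_tsum_div,
    ENNReal.ofReal_tsum_of_nonneg (fun k ↦ by positivity)
      (NormedSpace.expSeries_div_summable (t * |x|))]
  congr! with k
  rw [← ofReal_norm, Real.norm_eq_abs, ← ENNReal.ofReal_pow (abs_nonneg x),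
    ← ENNReal.ofReal_mul (by positivity), mul_pow, mul_div_right_comm]

lemma lintegral_exp_mul_abs (hX : AEMeasurable X μ) {t : ℝ} (ht : 0 ≤ t) :
    ∫⁻ ω, ENNReal.ofReal (Real.exp (t * |X ω|)) ∂μ =
      ∑' k : ℕ, ENNReal.ofReal (t ^ k / k.factorial) * ∫⁻ ω, ‖X ω‖ₑ ^ k ∂μ := by
  simp_rw [ofReal_exp_mul_abs ht]
  rw [lintegral_tsum fun k ↦ by fun_prop]
  congr! with k
  exact lintegral_const_mul'' _ (by fun_prop)

lemma lintegral_exp_mul_abs_lt_top (hX : AEMeasurable X μ) {C p : ℝ}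
    (hbound : ∀ k : ℕ, ∫⁻ ω, ‖X ω‖ₑ ^ k ∂μ ≤ ENNReal.ofReal (C * (k.factorial / p ^ k)))
    {t : ℝ} (ht : 0 ≤ t) (htp : t < p) :
    ∫⁻ ω, ENNReal.ofReal (Real.exp (t * |X ω|)) ∂μ < ⊤ := by
  have hp : 0 < p := ht.trans_lt htp
  have hterm (k : ℕ) : ENNReal.ofReal (t ^ k / k.factorial) * ∫⁻ ω, ‖X ω‖ₑ ^ k ∂μ ≤
      ENNReal.ofReal (C * (t / p) ^ k) := by
    grw [hbound k]
    rw [← ENNReal.ofReal_mul (by positivity), div_pow]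
    apply le_of_eq
    congr 1
    field_simp
  have hsum : Summable fun k : ℕ ↦ C * (t / p) ^ k :=
    (summable_geometric_of_lt_one (by positivity) ((div_lt_one hp).2 htp)).mul_left C
  rw [lintegral_exp_mul_abs hX ht]
  exact (ENNReal.tsum_le_tsum hterm).trans_lt hsum.tsum_ofReal_lt_top

lemma zero_mem_interior_integrableExpSet_of_lintegral_pow_le (hX : AEMeasurable X μ) {C p : ℝ}
    (hp : 0 < p)
    (hbound : ∀ k : ℕ, ∫⁻ ω, ‖X ω‖ₑ ^ k ∂μ ≤ ENNReal.ofReal (C * (k.factorial / p ^ k))) :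
    0 ∈ interior (integrableExpSet X μ) := by
  refine mem_interior.2 ⟨Ioo (-p) p, fun t ht ↦ ?_, isOpen_Ioo, by simpa using hp⟩
  have habs : Integrable (fun ω ↦ Real.exp (|t| * |X ω|)) μ := by
    refine ⟨by fun_prop, ?_⟩
    rw [hasFiniteIntegral_iff_ofReal (ae_of_all _ fun ω ↦ (Real.exp_pos _).le)]
    exact lintegral_exp_mul_abs_lt_top hX hbound (abs_nonneg t) (abs_lt.2 ht)
  refine habs.mono' (by fun_prop) (ae_of_all _ fun ω ↦ ?_)
  rw [Real.norm_of_nonneg (Real.exp_pos _).le, Real.exp_le_exp, ← abs_mul]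
  exact le_abs_self _

lemma isFiniteMeasure_of_zero_mem_integrableExpSet (h : 0 ∈ integrableExpSet X μ) :
    IsFiniteMeasure μ := by
  have hone : Integrable (fun _ ↦ (1 : ℝ)) μ := by simpa [integrableExpSet] using h
  simpa [integrable_const_iff] using hone

lemma eventuallyEq_of_iteratedDeriv_eq {𝕜 : Type*} [NontriviallyNormedField 𝕜] [CompleteSpace 𝕜]
    [CharZero 𝕜] {f g : 𝕜 → 𝕜} {z : 𝕜} (hf : AnalyticAt 𝕜 f z) (hg : AnalyticAt 𝕜 g z)
    (h : ∀ n, iteratedDeriv n f z = iteratedDeriv n g z) : f =ᶠ[𝓝 z] g := by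
  have hsub := hf.hasFPowerSeriesAt.sub hg.hasFPowerSeriesAt
  simp only [h, sub_self] at hsub
  filter_upwards [hsub.eventually_eq_zero] with w hw using sub_eq_zero.1 hw

lemma iteratedDeriv_complexMGF_zero (hX : 0 ∈ interior (integrableExpSet X μ)) (n : ℕ) :
    iteratedDeriv n (complexMGF X μ) 0 = ∫ ω, X ω ^ n ∂μ := by
  rw [iteratedDeriv_complexMGF (by simpa using hX), ← integral_complex_ofReal]
  simp

lemma eqOn_complexMGF_of_integral_pow_eq (hX : 0 ∈ interior (integrableExpSet X μ))
    (hY : 0 ∈ interior (integrableExpSet Y μ'))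
    (h : ∀ n : ℕ, ∫ ω, X ω ^ n ∂μ = ∫ ω, Y ω ^ n ∂μ') :
    EqOn (complexMGF X μ) (complexMGF Y μ')
      {z | z.re ∈ interior (integrableExpSet X μ) ∩ interior (integrableExpSet Y μ')} := by
  have hconvex := convex_integrableExpSet (X := X) (μ := μ) |>.interior.inter
    (convex_integrableExpSet (X := Y) (μ := μ')).interior
  refine (analyticOnNhd_complexMGF.mono fun z hz ↦ hz.1).eqOn_of_preconnected_of_eventuallyEq
    (analyticOnNhd_complexMGF.mono fun z hz ↦ hz.2)
    (hconvex.linear_preimage Complex.reLm).isPreconnected (z₀ := 0) (by simpa using ⟨hX, hY⟩) ?_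
  refine eventuallyEq_of_iteratedDeriv_eq (analyticAt_complexMGF (by simpa using hX))
    (analyticAt_complexMGF (by simpa using hY)) fun n ↦ ?_
  rw [iteratedDeriv_complexMGF_zero hX, iteratedDeriv_complexMGF_zero hY, h]

theorem map_eq_map_of_integral_pow_eq (hX : 0 ∈ interior (integrableExpSet X μ))
    (hY : 0 ∈ interior (integrableExpSet Y μ'))
    (h : ∀ n : ℕ, ∫ ω, X ω ^ n ∂μ = ∫ ω, Y ω ^ n ∂μ') : μ.map X = μ'.map Y := by
  have := isFiniteMeasure_of_zero_mem_integrableExpSet (interior_subset hX)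
  have := isFiniteMeasure_of_zero_mem_integrableExpSet (interior_subset hY)
  refine Measure.ext_of_charFun (funext fun t ↦ ?_)
  rw [← complexMGF_mul_I (aemeasurable_of_mem_interior_integrableExpSet hX),
    ← complexMGF_mul_I (aemeasurable_of_mem_interior_integrableExpSet hY)]
  exact eqOn_complexMGF_of_integral_pow_eq hX hY h (by simpa using ⟨hX, hY⟩)

lemma map_rpow_map_rpow_inv {ρ : Measure ℝ} (hρ : ∀ᵐ x ∂ρ, 0 ≤ x) {α : ℝ} (hα : α ≠ 0) :
    (ρ.map (· ^ α)).map (· ^ α⁻¹) = ρ := by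
  rw [Measure.map_map (by fun_prop) (by fun_prop)]
  have hid : (· ^ α⁻¹) ∘ (· ^ α) =ᵐ[ρ] id := by
    filter_upwards [hρ] with x hx using Real.rpow_rpow_inv hx hα
  rw [Measure.map_congr hid, Measure.map_id]

lemma lintegral_enorm_rpow_pow {ρ : Measure ℝ} (hρ : ∀ᵐ x ∂ρ, 0 ≤ x) (α : ℝ) (k : ℕ) :
    ∫⁻ x, ‖x ^ α‖ₑ ^ k ∂ρ = ∫⁻ x, ENNReal.ofReal (x ^ (α * k)) ∂ρ := by
  refine lintegral_congr_ae ?_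
  filter_upwards [hρ] with x hx
  rw [← enorm_pow, Real.rpow_mul_natCast hx, Real.enorm_of_nonneg (by positivity)]

lemma integral_rpow_pow {ρ : Measure ℝ} (hρ : ∀ᵐ x ∂ρ, 0 ≤ x) (α : ℝ) (k : ℕ) :
    ∫ x, (x ^ α) ^ k ∂ρ = (∫⁻ x, ENNReal.ofReal (x ^ (α * k)) ∂ρ).toReal := by
  have hpow : 0 ≤ᵐ[ρ] fun x ↦ (x ^ α) ^ k := by
    filter_upwards [hρ] with x hx using pow_nonneg (Real.rpow_nonneg hx α) k
  rw [integral_eq_lintegral_of_nonneg_ae hpow (by fun_prop)]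
  congr 1
  refine lintegral_congr_ae ?_
  filter_upwards [hρ] with x hx using by rw [Real.rpow_mul_natCast hx]

theorem eq_of_lintegral_rpow_eq {ρ₁ ρ₂ : Measure ℝ} (h₁ : ∀ᵐ x ∂ρ₁, 0 ≤ x)
    (h₂ : ∀ᵐ x ∂ρ₂, 0 ≤ x) {α : ℝ} (hα : α ≠ 0) {C p : ℝ} (hp : 0 < p)
    (hbound : ∀ k : ℕ, ∫⁻ x, ENNReal.ofReal (x ^ (α * k)) ∂ρ₁ ≤
      ENNReal.ofReal (C * (k.factorial / p ^ k)))
    (heq : ∀ k : ℕ, ∫⁻ x, ENNReal.ofReal (x ^ (α * k)) ∂ρ₁ =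
      ∫⁻ x, ENNReal.ofReal (x ^ (α * k)) ∂ρ₂) : ρ₁ = ρ₂ := by
  have hmap : ρ₁.map (· ^ α) = ρ₂.map (· ^ α) := by
    refine map_eq_map_of_integral_pow_eq
      (zero_mem_interior_integrableExpSet_of_lintegral_pow_le (by fun_prop) hp fun k ↦
        (lintegral_enorm_rpow_pow h₁ α k).trans_le (hbound k))
      (zero_mem_interior_integrableExpSet_of_lintegral_pow_le (by fun_prop) hp fun k ↦
        (lintegral_enorm_rpow_pow h₂ α k).trans_le ((heq k).symm.trans_le (hbound k))) fun k ↦ ?_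
    rw [integral_rpow_pow h₁, integral_rpow_pow h₂, heq]
  rw [← map_rpow_map_rpow_inv h₁ hα, hmap, map_rpow_map_rpow_inv h₂ hα]

end MomentProblem

section Mellin

variable {σ : Measure ℝ} {α β β' : ℝ}

lemma integrableOn_rpow_of_le (hβ : IntegrableOn (· ^ β) (Ioc (0 : ℝ) 1) σ) (h : β ≤ β') :
    IntegrableOn (· ^ β') (Ioc (0 : ℝ) 1) σ := by
  refine hβ.mono' (by fun_prop) (ae_restrict_of_forall_mem measurableSet_Ioc fun x hx ↦ ?_)
  rw [Real.norm_of_nonneg (Real.rpow_nonneg hx.1.le _)]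
  exact Real.rpow_le_rpow_of_exponent_ge hx.1 hx.2 h

lemma psiR_le_psiR (hβ : IntegrableOn (· ^ β) (Ioc (0 : ℝ) 1) σ) (h : β ≤ β') :
    psiR σ β ≤ psiR σ β' :=
  sub_le_sub_left (setIntegral_mono_on (integrableOn_rpow_of_le hβ h) hβ measurableSet_Ioc
    fun _ hx ↦ Real.rpow_le_rpow_of_exponent_ge hx.1 hx.2 h) 1

lemma psiR_lt_psiR (hβ : IntegrableOn (· ^ β) (Ioc (0 : ℝ) 1) σ) (h : β < β')
    (hσ : σ (Ioo 0 1) ≠ 0) : psiR σ β < psiR σ β' := by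
  have hβ' := integrableOn_rpow_of_le hβ h.le
  have hpos : 0 < ∫ x in Ioc 0 1, (x ^ β - x ^ β') ∂σ := by
    rw [setIntegral_pos_iff_support_of_nonneg_ae
      (ae_restrict_of_forall_mem measurableSet_Ioc fun x hx ↦
        sub_nonneg.2 (Real.rpow_le_rpow_of_exponent_ge hx.1 hx.2 h.le)) (hβ.sub hβ')]
    refine hσ.bot_lt.trans_le (measure_mono fun x hx ↦ ⟨?_, Ioo_subset_Ioc_self hx⟩)
    exact (sub_pos.2 (Real.rpow_lt_rpow_of_exponent_gt hx.1 hx.2 h)).ne'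
  rw [integral_sub hβ hβ'] at hpos
  exact sub_lt_sub_left (sub_pos.1 hpos) 1

lemma measure_Ioo_ne_zero_of_setIntegral_ne_zero {E : Type*} [NormedAddCommGroup E]
    [NormedSpace ℝ E] {f : ℝ → E} (hf : f 1 = 0)
    (h : ∫ x in Ioc 0 1, f x ∂σ ≠ 0) : σ (Ioo 0 1) ≠ 0 := by
  refine fun hσ ↦ h (setIntegral_eq_zero_of_ae_eq_zero ?_)
  filter_upwards [measure_eq_zero_iff_ae_notMem.1 hσ] with x hx hx₁
  rw [hx₁.2.eq_of_not_lt fun hlt ↦ hx ⟨hx₁.1, hlt⟩, hf]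

lemma integrableOn_rpow_of_lintegral_ne_top
    (h : ∫⁻ x in Ioc (0 : ℝ) 1, ENNReal.ofReal (x ^ β) ∂σ ≠ ⊤) :
    IntegrableOn (· ^ β) (Ioc (0 : ℝ) 1) σ := by
  refine ⟨by fun_prop, ?_⟩
  rw [hasFiniteIntegral_iff_ofReal (ae_restrict_of_forall_mem measurableSet_Ioc fun x hx ↦
    Real.rpow_nonneg hx.1.le _)]
  exact h.lt_top

lemma mellinR_eq_toReal_lintegral (σ : Measure ℝ) (β : ℝ) :
    mellinR σ β = (∫⁻ x in Ioc (0 : ℝ) 1, ENNReal.ofReal (x ^ β) ∂σ).toReal :=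
  integral_eq_lintegral_of_nonneg_ae (ae_restrict_of_forall_mem measurableSet_Ioc fun _ hx ↦
    Real.rpow_nonneg hx.1.le _) (by fun_prop)

lemma psiR_pos_of_lt (hβ : ∫⁻ x in Ioc (0 : ℝ) 1, ENNReal.ofReal (x ^ β) ∂σ ≤ 1) (h : β < β')
    (hσ : σ (Ioo 0 1) ≠ 0) : 0 < psiR σ β' := by
  have hψ : 0 ≤ psiR σ β := by
    rw [psiR, mellinR_eq_toReal_lintegral, sub_nonneg]
    exact ENNReal.toReal_le_of_le_ofReal zero_le_one (by simpa using hβ)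
  exact hψ.trans_lt <| psiR_lt_psiR
    (integrableOn_rpow_of_lintegral_ne_top (hβ.trans_lt ENNReal.one_lt_top).ne) h hσ

/-- The sequence `m_k = (k - 1)! / A * ∏_{j=1}^{k-1} ψ(β + α j)⁻¹`, with an arbitrary normalisation
`A` in place of `α * c`. Only `k ≥ 1` is meaningful: `0 - 1 = 0` makes `m_0 = m_1`. -/
noncomputable def limitingMoment (σ : Measure ℝ) (α β A : ℝ) (k : ℕ) : ℝ :=
  ((k - 1).factorial / A) * ∏ j ∈ Finset.Icc 1 (k - 1), (psiR σ (β + α * j))⁻¹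

lemma prod_inv_psiR_le (hα : 0 ≤ α) (hint : IntegrableOn (· ^ (β + α)) (Ioc (0 : ℝ) 1) σ)
    (hψ : 0 < psiR σ (β + α)) (n : ℕ) :
    ∏ j ∈ Finset.Icc 1 n, (psiR σ (β + α * j))⁻¹ ≤ (psiR σ (β + α))⁻¹ ^ n := by
  have hle (j : ℕ) (hj : j ∈ Finset.Icc 1 n) : psiR σ (β + α) ≤ psiR σ (β + α * j) := by
    have hj₁ : (1 : ℝ) ≤ j := mod_cast (Finset.mem_Icc.1 hj).1
    exact psiR_le_psiR hint (by nlinarith)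
  simpa using Finset.prod_le_prod (fun j hj ↦ inv_nonneg.2 (hψ.le.trans (hle j hj)))
    fun j hj ↦ inv_anti₀ hψ (hle j hj)

lemma limitingMoment_le (hα : 0 ≤ α) (hint : IntegrableOn (· ^ (β + α)) (Ioc (0 : ℝ) 1) σ)
    (hψ : 0 < psiR σ (β + α)) {A : ℝ} (hA : 0 < A) {k : ℕ} (hk : 1 ≤ k) :
    limitingMoment σ α β A k ≤ psiR σ (β + α) / A * (k.factorial / psiR σ (β + α) ^ k) := by
  obtain ⟨n, rfl⟩ := Nat.exists_eq_add_of_le' hk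
  rw [limitingMoment, Nat.add_sub_cancel]
  calc (n.factorial / A) * ∏ j ∈ Finset.Icc 1 n, (psiR σ (β + α * j))⁻¹
      ≤ (n.factorial / A) * (psiR σ (β + α))⁻¹ ^ n := by
        gcongr
        exact prod_inv_psiR_le hα hint hψ n
    _ ≤ ((n + 1).factorial / A) * (psiR σ (β + α))⁻¹ ^ n := by
        gcongr
        exact n.le_succ
    _ = psiR σ (β + α) / A * ((n + 1).factorial / psiR σ (β + α) ^ (n + 1)) := by
        rw [inv_pow, pow_succ]
        field_simp

end Mellin

theorem limiting_moment_problem_is_determinate_general {σ : Measure ℝ} {α β : ℝ} (hα : 0 < α)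
    (hint : IntegrableOn (· ^ (β + α)) (Ioc (0 : ℝ) 1) σ) (hψ : 0 < psiR σ (β + α))
    {A : ℝ} (hA : 0 < A) {ρ₁ ρ₂ : Measure ℝ} [IsFiniteMeasure ρ₁] (hmass : ρ₁ univ = ρ₂ univ)
    (h₁ : ρ₁ (Iio 0) = 0) (h₂ : ρ₂ (Iio 0) = 0)
    (hm₁ : ∀ k : ℕ, 1 ≤ k → ∫⁻ x in Ici (0 : ℝ), ENNReal.ofReal (x ^ (α * k)) ∂ρ₁ =
      ENNReal.ofReal (limitingMoment σ α β A k))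
    (hm₂ : ∀ k : ℕ, 1 ≤ k → ∫⁻ x in Ici (0 : ℝ), ENNReal.ofReal (x ^ (α * k)) ∂ρ₂ =
      ENNReal.ofReal (limitingMoment σ α β A k)) : ρ₁ = ρ₂ := by
  have hnonneg₁ : ∀ᵐ x ∂ρ₁, 0 ≤ x := by simpa [ae_iff, ← Iio_def] using h₁
  have hnonneg₂ : ∀ᵐ x ∂ρ₂, 0 ≤ x := by simpa [ae_iff, ← Iio_def] using h₂
  rw [Measure.restrict_eq_self_of_ae_mem (s := Ici 0) hnonneg₁] at hm₁
  rw [Measure.restrict_eq_self_of_ae_mem (s := Ici 0) hnonneg₂] at hm₂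
  set p := psiR σ (β + α) with hp
  have hbound (k : ℕ) : ∫⁻ x, ENNReal.ofReal (x ^ (α * k)) ∂ρ₁ ≤
      ENNReal.ofReal ((ρ₁.real univ + p / A) * (k.factorial / p ^ k)) := by
    rcases k.eq_zero_or_pos with rfl | hk
    · have : 0 ≤ p / A := by positivity
      simpa [← ofReal_measureReal] using ENNReal.ofReal_le_ofReal (by linarith)
    · grw [hm₁ k hk, limitingMoment_le hα.le hint hψ hA hk, ← hp]
      gcongr
      exact le_add_of_nonneg_left measureReal_nonneg
  refine eq_of_lintegral_rpow_eq hnonneg₁ hnonneg₂ hα.ne' hψ hbound fun k ↦ ?_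
  rcases k.eq_zero_or_pos with rfl | hk
  · simpa using hmass
  · rw [hm₁ k hk, hm₂ k hk]

/-- Suppose `σ({1}) < 1`, `α > 0`, `φ(β*) = 1` and
`c = ∫ (−log x)·x^{β*} σ(dx) ∈ (0,∞)`.  Then the moment sequence
`m_k = ((k−1)!/(αc))·∏_{j=1}^{k−1} ψ(β*+αj)⁻¹` is determinate: two probability measures
on `[0,∞)` whose moments of orders `αk` all equal `m_k` must coincide. -/
theorem limiting_moment_problem_is_determinate
    (σ : Measure ℝ) (α : ℝ) (hα : 0 < α)
    (h1 : σ {(1:ℝ)} < 1) (βs : ℝ)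
    (hβs : ∫⁻ x in Ioc (0:ℝ) 1, ENNReal.ofReal (x ^ βs) ∂σ = 1)
    (hint : IntegrableOn (fun x : ℝ => (-Real.log x) * x ^ βs) (Ioc (0:ℝ) 1) σ)
    (hc : 0 < ∫ x in Ioc (0:ℝ) 1, (-Real.log x) * x ^ βs ∂σ) :
    ∀ ρ₁ ρ₂ : Measure ℝ, IsProbabilityMeasure ρ₁ → IsProbabilityMeasure ρ₂ →
      ρ₁ (Iio (0:ℝ)) = 0 → ρ₂ (Iio (0:ℝ)) = 0 →
      (∀ k : ℕ, 1 ≤ k →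
        ∫⁻ x in Ici (0:ℝ), ENNReal.ofReal (x ^ (α * k)) ∂ρ₁
          = ENNReal.ofReal ((((k - 1).factorial : ℝ)
              / (α * ∫ x in Ioc (0:ℝ) 1, (-Real.log x) * x ^ βs ∂σ))
            * ∏ j ∈ Finset.Icc 1 (k - 1), (psiR σ (βs + α * j))⁻¹)) →
      (∀ k : ℕ, 1 ≤ k →
        ∫⁻ x in Ici (0:ℝ), ENNReal.ofReal (x ^ (α * k)) ∂ρ₂
          = ENNReal.ofReal ((((k - 1).factorial : ℝ)
              / (α * ∫ x in Ioc (0:ℝ) 1, (-Real.log x) * x ^ βs ∂σ))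
            * ∏ j ∈ Finset.Icc 1 (k - 1), (psiR σ (βs + α * j))⁻¹)) →
      ρ₁ = ρ₂ := by
  intro ρ₁ ρ₂ _ _ hρ₁ hρ₂ hm₁ hm₂
  have hσ : σ (Ioo 0 1) ≠ 0 := measure_Ioo_ne_zero_of_setIntegral_ne_zero (by simp) hc.ne'
  exact limiting_moment_problem_is_determinate_general hα
    (integrableOn_rpow_of_le (integrableOn_rpow_of_lintegral_ne_top (β := βs) (by simp [hβs]))
      (by linarith))
    (psiR_pos_of_lt hβs.le (lt_add_of_pos_right βs hα) hσ) (mul_pos hα hc) (by simp)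
    hρ₁ hρ₂ hm₁ hm₂
end
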